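/- arXiv:1402.1585 — 6 statements merged into one kernel-verified Lean document; each statement's English description precedes it below -/
import Mathlib

section
/- For all positive integers r, s, t ≥ 1 with k = r+s+t−1 ≥ 3 and every τ in the complex upper half-plane, one has 0 = Σ_{i+j=k, i,j≥1} C(i−1,t−1)C(j−1,s−1)(−1)^{i+r} (P_{i,j}(τ) − (−1)^j E_{i+j}(τ)) + Σ_{j+h=k, j,h≥1} C(j−1,r−1)C(h−1,t−1)(−1)^{j+s} (P_{j,h}(τ) − (−1)^h E_{j+h}(τ)) + Σ_{h+i=k, h,i≥1} C(h−1,s−1)C(i−1,r−1)(−1)^{h+t} (P_{h,i}(τ) − (−1)^i E_{h+i}(τ)), where C(a,b) denotes the binomial coefficient. -/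
open Complex Finset Filter

/-- The Eisenstein series `E_k` as a `q`-series, defined on `ℂ`
(meaningful on the upper half-plane), with `E_k = 0` for `k` odd and `k < 2`. -/
noncomputable def Eis (k : ℕ) (τ : ℂ) : ℂ :=
  if Even k ∧ 2 ≤ k then
    (2 / (Nat.factorial (k - 1) : ℂ)) *
      (-(bernoulli k : ℂ) / (2 * k) +
        ∑' n : ℕ, (∑ d ∈ (n + 1).divisors, (d : ℂ) ^ (k - 1)) *
          Complex.exp (2 * Real.pi * Complex.I * τ) ^ (n + 1))
  else 0

/-- `E_k'(τ) = (2π√-1)⁻¹ dE_k/dτ`. -/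
noncomputable def Eis' (k : ℕ) (τ : ℂ) : ℂ :=
  (2 * Real.pi * Complex.I)⁻¹ * deriv (Eis k) τ

/-- `P_{r,s} = E_r E_s + δ_{r,2} E_s'/s + δ_{s,2} E_r'/r`. -/
noncomputable def Pf (r s : ℕ) (τ : ℂ) : ℂ :=
  Eis r τ * Eis s τ + (if r = 2 then Eis' s τ / s else 0) +
    (if s = 2 then Eis' r τ / r else 0)

/-- Quadruples of positive integers with `ab+cd=n`. -/
def Quad (n : ℕ) : Finset (ℕ × ℕ × ℕ × ℕ) :=
  ((range (n+1)) ×ˢ (range (n+1)) ×ˢ (range (n+1)) ×ˢ (range (n+1))).filter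
    (fun v => 0 < v.1 ∧ 0 < v.2.1 ∧ 0 < v.2.2.1 ∧ 0 < v.2.2.2 ∧ v.1 * v.2.1 + v.2.2.1 * v.2.2.2 = n)

lemma mem_Quad {n a b c d : ℕ} : (a,b,c,d) ∈ Quad n ↔
    0 < a ∧ 0 < b ∧ 0 < c ∧ 0 < d ∧ a * b + c * d = n := by
  simp only [Quad, mem_filter, mem_product, mem_range]
  constructor
  · rintro ⟨_, h⟩; exact h
  · rintro ⟨ha, hb, hc, hd, h⟩
    refine ⟨⟨?_, ?_, ?_, ?_⟩, ha, hb, hc, hd, h⟩ <;> nlinarith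

lemma quad_sum {M : Type*} [AddCommMonoid M] (n : ℕ) (f : ℕ → ℕ → M) :
    ∑ v ∈ Quad n, f v.1 v.2.2.1 =
    ∑ m ∈ antidiagonal n, ∑ a ∈ m.1.divisors, ∑ c ∈ m.2.divisors, f a c := by
  have h : ∀ m : ℕ × ℕ, ∑ a ∈ m.1.divisors, ∑ c ∈ m.2.divisors, f a c =
      ∑ w ∈ m.1.divisorsAntidiagonal ×ˢ m.2.divisorsAntidiagonal, f w.1.1 w.2.1 := by
    intro m
    rw [sum_product, Nat.sum_divisorsAntidiagonal (f := fun a _ => ∑ y ∈ m.2.divisorsAntidiagonal, f a y.1)]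
    refine sum_congr rfl fun a _ => ?_
    rw [Nat.sum_divisorsAntidiagonal (f := fun c _ => f a c)]
  simp_rw [h]
  rw [sum_sigma']
  refine sum_bij' (fun v _ => ⟨(v.1 * v.2.1, v.2.2.1 * v.2.2.2), ((v.1, v.2.1), (v.2.2.1, v.2.2.2))⟩)
    (fun w _ => (w.2.1.1, w.2.1.2, w.2.2.1, w.2.2.2)) ?_ ?_ ?_ ?_ ?_
  · rintro ⟨a, b, c, d⟩ hv
    rw [mem_Quad] at hv
    obtain ⟨ha, hb, hc, hd, h⟩ := hv
    simp [h, ha.ne', hb.ne', hc.ne', hd.ne']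
  · rintro ⟨⟨m1, m2⟩, ⟨⟨a, b⟩, ⟨c, d⟩⟩⟩ hw
    simp only [mem_sigma, HasAntidiagonal.mem_antidiagonal, mem_product, Nat.mem_divisorsAntidiagonal] at hw
    obtain ⟨h, ⟨rfl, h1⟩, rfl, h2⟩ := hw
    simp only [ne_eq, mul_eq_zero, not_or] at h1 h2
    exact mem_Quad.mpr ⟨Nat.pos_of_ne_zero h1.1, Nat.pos_of_ne_zero h1.2,
      Nat.pos_of_ne_zero h2.1, Nat.pos_of_ne_zero h2.2, h⟩
  · rintro ⟨a, b, c, d⟩ hv; rfl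
  · rintro ⟨⟨m1, m2⟩, ⟨⟨a, b⟩, ⟨c, d⟩⟩⟩ hw
    simp only [mem_sigma, HasAntidiagonal.mem_antidiagonal, mem_product, Nat.mem_divisorsAntidiagonal] at hw
    obtain ⟨h, ⟨rfl, h1⟩, rfl, h2⟩ := hw
    rfl
  · intros; rfl

lemma quad_swap {M : Type*} [AddCommMonoid M] (n : ℕ) (f : ℕ → ℕ → ℕ → ℕ → M) :
    ∑ v ∈ Quad n, f v.1 v.2.1 v.2.2.1 v.2.2.2 = ∑ v ∈ Quad n, f v.2.2.1 v.2.2.2 v.1 v.2.1 := by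
  refine sum_nbij' (fun v => (v.2.2.1, v.2.2.2, v.1, v.2.1)) (fun v => (v.2.2.1, v.2.2.2, v.1, v.2.1))
    ?_ ?_ ?_ ?_ ?_
  · rintro ⟨a, b, c, d⟩ hv
    rw [mem_Quad] at *
    obtain ⟨ha, hb, hc, hd, h⟩ := hv
    exact ⟨hc, hd, ha, hb, by rw [← h, add_comm]⟩
  · rintro ⟨a, b, c, d⟩ hv
    rw [mem_Quad] at *
    obtain ⟨ha, hb, hc, hd, h⟩ := hv
    exact ⟨hc, hd, ha, hb, by rw [← h, add_comm]⟩
  · intros; rfl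
  · intros; rfl
  · intros; rfl

lemma quad_comb {M : Type*} [CommRing M] (n : ℕ) (H1 H2 : ℕ → ℕ → M)
    (h1 : ∀ a c, H1 (a + c) c = H2 c a) (h2 : ∀ a c, H1 a (a + c) = H2 c a) :
    ∑ v ∈ Quad n, (H1 v.1 v.2.2.1 - H2 v.1 v.2.2.1) =
      ∑ m ∈ n.divisors, (((n / m : ℕ) : M) - 1) * H1 m m
      - ∑ m ∈ n.divisors, ∑ a ∈ Ico 1 m, H2 a (m - a) := by
  -- a > c
  have A : ∑ v ∈ Quad n with v.2.2.1 < v.1, H1 v.1 v.2.2.1 =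
      ∑ v ∈ Quad n with v.2.1 < v.2.2.2, H2 v.2.2.1 v.1 := by
    refine sum_nbij' (fun v => (v.1 - v.2.2.1, v.2.1, v.2.2.1, v.2.1 + v.2.2.2))
      (fun v => (v.1 + v.2.2.1, v.2.1, v.2.2.1, v.2.2.2 - v.2.1)) ?_ ?_ ?_ ?_ ?_
    · rintro ⟨a, b, c, d⟩ hv
      simp only [mem_filter, mem_Quad] at *
      obtain ⟨⟨ha, hb, hc, hd, h⟩, hlt⟩ := hv
      obtain ⟨e, rfl⟩ := Nat.exists_eq_add_of_lt hlt
      refine ⟨⟨by omega, hb, hc, by omega, ?_⟩, by omega⟩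
      rw [show c + e + 1 - c = e + 1 by omega, ← h]; ring
    · rintro ⟨a, b, c, d⟩ hv
      simp only [mem_filter, mem_Quad] at *
      obtain ⟨⟨ha, hb, hc, hd, h⟩, hlt⟩ := hv
      obtain ⟨e, rfl⟩ := Nat.exists_eq_add_of_lt hlt
      refine ⟨⟨by omega, hb, hc, by omega, ?_⟩, by omega⟩
      rw [show b + e + 1 - b = e + 1 by omega, ← h]; ring
    · rintro ⟨a, b, c, d⟩ hv
      simp only [mem_filter, mem_Quad] at *
      simp only [Prod.mk.injEq, true_and, and_true]; omega
    · rintro ⟨a, b, c, d⟩ hv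
      simp only [mem_filter, mem_Quad] at *
      simp only [Prod.mk.injEq, true_and, and_true]; omega
    · rintro ⟨a, b, c, d⟩ hv
      simp only [mem_filter, mem_Quad] at *
      rw [← h1]; congr 1; omega
  have B : ∑ v ∈ Quad n with v.1 < v.2.2.1, H1 v.1 v.2.2.1 =
      ∑ v ∈ Quad n with v.2.2.2 < v.2.1, H2 v.2.2.1 v.1 := by
    refine sum_nbij' (fun v => (v.1, v.2.1 + v.2.2.2, v.2.2.1 - v.1, v.2.2.2))
      (fun v => (v.1, v.2.1 - v.2.2.2, v.2.2.1 + v.1, v.2.2.2)) ?_ ?_ ?_ ?_ ?_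
    · rintro ⟨a, b, c, d⟩ hv
      simp only [mem_filter, mem_Quad] at *
      obtain ⟨⟨ha, hb, hc, hd, h⟩, hlt⟩ := hv
      obtain ⟨e, rfl⟩ := Nat.exists_eq_add_of_lt hlt
      refine ⟨⟨by omega, by omega, by omega, by omega, ?_⟩, by omega⟩
      rw [show a + e + 1 - a = e + 1 by omega, ← h]; ring
    · rintro ⟨a, b, c, d⟩ hv
      simp only [mem_filter, mem_Quad] at *
      obtain ⟨⟨ha, hb, hc, hd, h⟩, hlt⟩ := hv
      obtain ⟨e, rfl⟩ := Nat.exists_eq_add_of_lt hlt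
      refine ⟨⟨by omega, by omega, by omega, by omega, ?_⟩, by omega⟩
      rw [show d + e + 1 - d = e + 1 by omega, ← h]; ring
    · rintro ⟨a, b, c, d⟩ hv
      simp only [mem_filter, mem_Quad] at *
      simp only [Prod.mk.injEq, true_and, and_true]; omega
    · rintro ⟨a, b, c, d⟩ hv
      simp only [mem_filter, mem_Quad] at *
      simp only [Prod.mk.injEq, true_and, and_true]; omega
    · rintro ⟨a, b, c, d⟩ hv
      simp only [mem_filter, mem_Quad] at *
      rw [← h2]; congr 1; omega
  have Ce : ∑ v ∈ Quad n with v.1 = v.2.2.1, H1 v.1 v.2.2.1 =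
      ∑ m ∈ n.divisors, (((n / m : ℕ) : M) - 1) * H1 m m := by
    have : ∀ m ∈ n.divisors, (((n / m : ℕ) : M) - 1) * H1 m m = ∑ b ∈ Ico 1 (n / m), H1 m m := by
      intro m hm
      rw [Nat.mem_divisors] at hm
      have : 1 ≤ n / m := Nat.div_pos (Nat.le_of_dvd (by omega) hm.1)
        (Nat.pos_of_dvd_of_pos hm.1 (by omega))
      rw [sum_const, Nat.card_Ico, nsmul_eq_mul, Nat.cast_sub this, Nat.cast_one]
    rw [sum_congr rfl this, sum_sigma']
    refine sum_bij' (fun v _ => ⟨v.1, v.2.1⟩) (fun w _ => (w.1, w.2, w.1, n / w.1 - w.2)) ?_ ?_ ?_ ?_ ?_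
    · rintro ⟨a, b, c, d⟩ hv
      simp only [mem_filter, mem_Quad, mem_sigma, Nat.mem_divisors, mem_Ico] at *
      obtain ⟨⟨ha, hb, hc, hd, h⟩, rfl⟩ := hv
      have h' : n = a * (b + d) := by rw [← h]; ring
      subst h'
      rw [Nat.mul_div_cancel_left _ ha]
      refine ⟨⟨⟨_, rfl⟩, by positivity⟩, by omega, by omega⟩
    · rintro ⟨m, b⟩ hv
      simp only [mem_filter, mem_Quad, mem_sigma, Nat.mem_divisors, mem_Ico] at *
      obtain ⟨⟨⟨e, rfl⟩, h0⟩, hb, hb2⟩ := hv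
      have hm : 0 < m := by rcases Nat.eq_zero_or_pos m with rfl | h <;> simp_all
      rw [Nat.mul_div_cancel_left _ hm] at *
      refine ⟨⟨hm, by omega, hm, by omega, ?_⟩, trivial⟩
      rw [← mul_add]; congr 1; omega
    · rintro ⟨a, b, c, d⟩ hv
      simp only [mem_filter, mem_Quad] at *
      obtain ⟨⟨ha, hb, hc, hd, h⟩, rfl⟩ := hv
      have h' : n = a * (b + d) := by rw [← h]; ring
      subst h'
      rw [Nat.mul_div_cancel_left _ ha]
      simp
    · rintro ⟨m, b⟩ hv; rfl
    · rintro ⟨a, b, c, d⟩ hv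
      simp only [mem_filter] at *
      rw [← hv.2]
  have De : ∑ v ∈ Quad n with v.2.1 = v.2.2.2, H2 v.1 v.2.2.1 =
      ∑ m ∈ n.divisors, ∑ a ∈ Ico 1 m, H2 a (m - a) := by
    rw [sum_sigma']
    refine sum_bij' (fun v _ => ⟨v.1 + v.2.2.1, v.1⟩) (fun w _ => (w.2, n / w.1, w.1 - w.2, n / w.1)) ?_ ?_ ?_ ?_ ?_
    · rintro ⟨a, b, c, d⟩ hv
      simp only [mem_filter, mem_Quad, mem_sigma, Nat.mem_divisors, mem_Ico] at *
      obtain ⟨⟨ha, hb, hc, hd, h⟩, rfl⟩ := hv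
      have h' : n = (a + c) * b := by rw [← h]; ring
      subst h'
      refine ⟨⟨⟨_, rfl⟩, by positivity⟩, by omega, by omega⟩
    · rintro ⟨m, b⟩ hv
      simp only [mem_filter, mem_Quad, mem_sigma, Nat.mem_divisors, mem_Ico] at *
      obtain ⟨⟨⟨e, rfl⟩, h0⟩, hb, hb2⟩ := hv
      have hm : 0 < m := by rcases Nat.eq_zero_or_pos m with rfl | h <;> simp_all
      have he : 0 < e := by rcases Nat.eq_zero_or_pos e with rfl | h <;> simp_all
      rw [Nat.mul_div_cancel_left _ hm] at *
      refine ⟨⟨by omega, he, by omega, he, ?_⟩, trivial⟩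
      rw [← add_mul]; congr 1; omega
    · rintro ⟨a, b, c, d⟩ hv
      simp only [mem_filter, mem_Quad] at *
      obtain ⟨⟨ha, hb, hc, hd, h⟩, rfl⟩ := hv
      have h' : n = (a + c) * b := by rw [← h]; ring
      subst h'
      rw [Nat.mul_div_cancel_left _ (by omega)]
      simp
    · rintro ⟨m, b⟩ hv
      simp only [mem_sigma, mem_Ico] at hv
      simp only [Sigma.mk.injEq, heq_eq_eq, and_true]
      omega
    · rintro ⟨a, b, c, d⟩ hv
      simp
  have sp : ∀ (f : ℕ × ℕ × ℕ × ℕ → M) (x y : ℕ × ℕ × ℕ × ℕ → ℕ), ∑ v ∈ Quad n, f v =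
      ∑ v ∈ Quad n with y v < x v, f v + ∑ v ∈ Quad n with x v < y v, f v
      + ∑ v ∈ Quad n with x v = y v, f v := by
    intro f x y
    simp only [sum_filter]
    rw [← sum_add_distrib, ← sum_add_distrib]
    refine sum_congr rfl fun v _ => ?_
    rcases lt_trichotomy (x v) (y v) with h | h | h
    · simp [h, h.ne, h.le]
    · simp [h]
    · simp [h, h.ne', h.le]
  have sw := quad_swap n (fun a b c d => H2 a c)
  have swe : ∑ v ∈ Quad n with v.2.1 = v.2.2.2, H2 v.1 v.2.2.1 =
     ∑ v ∈ Quad n with v.2.1 = v.2.2.2, H2 v.2.2.1 v.1 := by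
    simp only [sum_filter]
    rw [quad_swap n (fun a b c d => if b = d then H2 a c else 0)]
    refine sum_congr rfl fun v _ => ?_
    simp only [eq_comm]
  rw [sum_sub_distrib, sw, sp (fun v => H1 v.1 v.2.2.1) (fun v => v.1) (fun v => v.2.2.1),
    sp (fun v => H2 v.2.2.1 v.1) (fun v => v.2.1) (fun v => v.2.2.2), ← De, ← Ce, A, B, swe]
  ring

lemma geom_half {F : Type*} [Field F] [CharZero F] (q : F) (hq : q ≠ 1) (m : ℕ) (hm : 1 ≤ m) :
    ∑ a ∈ Ico 1 m, q ^ a = (q ^ m - 1) * ((q + 1) / (q - 1) / 2) - (q ^ m + 1) / 2 := by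
  have h : q - 1 ≠ 0 := sub_ne_zero.mpr hq
  induction m, hm using Nat.le_induction with
  | base => simp; field_simp; ring
  | succ n hn ih =>
    rw [sum_Ico_succ_top hn, ih]
    field_simp
    ring

lemma cot_rel {F : Type*} [Field F] [CharZero F] (p q r : F) (h : p * q * r = 1)
    (hp : p ≠ 1) (hq : q ≠ 1) (hr : r ≠ 1) :
    ((p + 1) / (p - 1) / 2) * ((q + 1) / (q - 1) / 2) + ((q + 1) / (q - 1) / 2) * ((r + 1) / (r - 1) / 2)
     + ((r + 1) / (r - 1) / 2) * ((p + 1) / (p - 1) / 2) = -1/4 := by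
  have h1 : p - 1 ≠ 0 := sub_ne_zero.mpr hp
  have h2 : q - 1 ≠ 0 := sub_ne_zero.mpr hq
  have h3 : r - 1 ≠ 0 := sub_ne_zero.mpr hr
  field_simp
  linear_combination 16 * h

lemma geom_pair {F : Type*} [Field F] [CharZero F] (p q r : F) (h : p * q * r = 1)
    (hq : q ≠ 1) (m : ℕ) (hm : 1 ≤ m) :
    ∑ a ∈ Ico 1 m, (p ^ m * q ^ a + (p⁻¹) ^ m * (q⁻¹) ^ a) =
      -((q + 1) / (q - 1) / 2) * ((r ^ m - (r⁻¹) ^ m) + (p ^ m - (p⁻¹) ^ m))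
      - (p ^ m + (p⁻¹) ^ m + r ^ m + (r⁻¹) ^ m) / 2 := by
  have hq0 : q ≠ 0 := by rintro rfl; simp at h
  have hp0 : p ≠ 0 := by rintro rfl; simp at h
  have hr0 : r = p⁻¹ * q⁻¹ := by field_simp; linear_combination h
  have h1 : q⁻¹ ≠ 1 := by simpa using hq
  have h2 : q - 1 ≠ 0 := sub_ne_zero.mpr hq
  rw [sum_add_distrib, ← mul_sum, ← mul_sum, geom_half q hq m hm, geom_half _ h1 m hm]
  have : (q⁻¹ + 1) / (q⁻¹ - 1) = - ((q + 1) / (q - 1)) := by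
    have h3 : 1 - q ≠ 0 := by intro h; apply h2; linear_combination -h
    field_simp
    ring
  rw [this, hr0]
  simp only [mul_pow, mul_inv, inv_inv]
  ring

lemma conv_rel {F : Type*} [Field F] [CharZero F] (p q r : F) (h : p * q * r = 1)
    (hp : p ≠ 1) (hq : q ≠ 1) (hr : r ≠ 1) (H2 : ℕ → ℕ → F)
    (hH2 : H2 = fun a c => p ^ a * q⁻¹ ^ c + q ^ a * r⁻¹ ^ c + r ^ a * p⁻¹ ^ c
      + (p⁻¹ ^ a * q ^ c + q⁻¹ ^ a * r ^ c + r⁻¹ ^ a * p ^ c)) (m : ℕ) (hm : 1 ≤ m) :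
    ∑ a ∈ Ico 1 m, H2 a (m - a) = 
     - ((p ^ m - p⁻¹ ^ m) * ((q + 1) / (q - 1) / 2 + (r + 1) / (r - 1) / 2)
      + (q ^ m - q⁻¹ ^ m) * ((r + 1) / (r - 1) / 2 + (p + 1) / (p - 1) / 2)
      + (r ^ m - r⁻¹ ^ m) * ((p + 1) / (p - 1) / 2 + (q + 1) / (q - 1) / 2))
      - (p ^ m + p⁻¹ ^ m + q ^ m + q⁻¹ ^ m + r ^ m + r⁻¹ ^ m) := by
  have hq0 : q ≠ 0 := by rintro rfl; simp at h
  have hp0 : p ≠ 0 := by rintro rfl; simp at h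
  have hr0 : r ≠ 0 := by rintro rfl; simp at h
  have e1 := geom_pair p q r h hq m hm
  have e2 := geom_pair q r p (by linear_combination h) hr m hm
  have e3 := geom_pair r p q (by linear_combination h) hp m hm
  have key : ∀ p q r : F, p ≠ 0 → q ≠ 0 → p * q * r = 1 → ∀ a ∈ Ico 1 m,
      p ^ a * q⁻¹ ^ (m - a) + p⁻¹ ^ a * q ^ (m-a) = q ^ m * r ^ a + q⁻¹ ^ m * r⁻¹ ^ a := by
    intro p q r hp hq h a ha
    have hr0 : r = p⁻¹ * q⁻¹ := by field_simp; linear_combination h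
    rw [mem_Ico] at ha
    obtain ⟨c, rfl⟩ : ∃ c, m = a + c := ⟨m - a, by omega⟩
    rw [show a + c - a = c by omega, hr0]
    simp only [mul_pow, mul_inv, inv_inv, pow_add, inv_pow]
    field_simp
    ring
  have : ∀ a ∈ Ico 1 m, H2 a (m - a) = (p ^ m * q ^ a + (p⁻¹) ^ m * (q⁻¹) ^ a) + 
     (q ^ m * r ^ a + (q⁻¹) ^ m * (r⁻¹) ^ a) + (r ^ m * p ^ a + (r⁻¹) ^ m * (p⁻¹) ^ a) := by
    intro a ha
    rw [← key p q r hp0 hq0 h a ha, ← key q r p hq0 hr0 (by linear_combination h) a ha,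
      ← key r p q hr0 hp0 (by linear_combination h) a ha, hH2]
    ring
  rw [sum_congr rfl this, sum_add_distrib, sum_add_distrib, e1, e2, e3]
  ring

/-- `n`-th `q`-coefficient of the Eisenstein series. -/
def eco (k n : ℕ) : ℚ :=
  if Even k ∧ 2 ≤ k then
    if n = 0 then - bernoulli k / k.factorial
    else 2 / ((k-1).factorial : ℚ) * ∑ d ∈ n.divisors, (d : ℚ) ^ (k - 1)
  else 0

open PowerSeries in
/-- the scaled exponential -/
noncomputable def Ex {A : Type*} [CommRing A] [Algebra ℚ A] (w : A) : PowerSeries A :=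
  rescale w (exp A)

open PowerSeries in
noncomputable def Ss {A : Type*} [CommRing A] [Algebra ℚ A] (n : ℕ) (x : A) : PowerSeries A :=
  rescale x (mk fun m => algebraMap ℚ A (eco (m+1) n))

open PowerSeries in
noncomputable def Ts {A : Type*} [CommRing A] [Algebra ℚ A] (n : ℕ) (x : A) : PowerSeries A :=
  rescale x (mk fun m => algebraMap ℚ A (n * eco (m+1) n / (m + 1)))

open PowerSeries in
noncomputable def Ws {A : Type*} [CommRing A] [Algebra ℚ A] (n : ℕ) (x y : A) : PowerSeries A :=
  mk fun N => ∑ p ∈ antidiagonal N, x ^ p.1 * (-y) ^ p.2 * algebraMap ℚ A (eco (N+2) n)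

noncomputable def Ls {A : Type*} [CommRing A] [Algebra ℚ A] (n : ℕ) (x : A) : PowerSeries A :=
  ∑ d ∈ n.divisors, (Ex x ^ d - Ex (-x) ^ d)

section
variable {A : Type*} [CommRing A] [Algebra ℚ A]
open PowerSeries

lemma Ex_add (x y : A) : Ex (x + y) = Ex x * Ex y := (exp_mul_exp_eq_exp_add x y).symm

lemma Ex_zero : Ex (0 : A) = 1 := by
  unfold Ex; ext n; rw [coeff_rescale, coeff_exp, coeff_one]
  rcases n with _ | n <;> simp

lemma Ex_pow (x : A) (d : ℕ) : Ex x ^ d = Ex (d * x) := by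
  induction d with
  | zero => simp [Ex_zero]
  | succ d ih => rw [pow_succ, ih, ← Ex_add]; congr 1; push_cast; ring

lemma coeff_Ex (x : A) (m : ℕ) : coeff m (Ex x) = x ^ m * algebraMap ℚ A (1 / m.factorial) := by
  simp [Ex, coeff_rescale, coeff_exp]

lemma Ss_eq (n : ℕ) (x : A) : Ss n x = (if n = 0 then Ss 0 x else 0) + Ls n x := by
  by_cases hn : n = 0
  · subst hn; simp [Ls]
  rw [if_neg hn, zero_add]
  ext m
  simp only [Ss, Ls, coeff_rescale, coeff_mk, map_sum, map_sub, Ex_pow, coeff_Ex, eco, if_neg hn]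
  by_cases hm : Even (m + 1)
  · have hodd : Odd m := by rw [Nat.even_add_one] at hm; simpa using hm
    have h2 : 2 ≤ m + 1 := by have := hodd.pos; omega
    rw [if_pos ⟨hm, h2⟩, map_mul, map_sum, mul_sum, mul_sum]
    refine sum_congr rfl fun d _ => ?_
    rw [Nat.add_sub_cancel, mul_neg, hodd.neg_pow, mul_pow]
    rw [div_eq_mul_one_div, map_mul]
    simp only [map_pow, map_natCast, map_ofNat]
    ring
  · have hev : Even m := by rw [Nat.even_add_one] at hm; simpa using hm
    rw [if_neg (fun h => hm h.1)]
    symm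
    rw [map_zero, mul_zero]
    refine sum_eq_zero fun d _ => ?_
    rw [mul_neg, hev.neg_pow, sub_self]

lemma Ts_eq (n : ℕ) (x : A) : C x * X * Ts n x =
    ∑ d ∈ n.divisors, ((n / d : ℕ) : PowerSeries A) * (Ex x ^ d + Ex (-x) ^ d - 2) := by
  by_cases hn : n = 0
  · subst hn
    have : Ts 0 x = 0 := by ext m; rw [Ts, coeff_rescale, coeff_mk]; simp
    rw [this]; simp
  ext m
  rw [mul_assoc, coeff_C_mul]
  rcases m with _ | m
  · simp only [Ex_pow]
    rw [coeff_zero_X_mul, mul_zero, map_sum]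
    symm
    refine sum_eq_zero fun d _ => ?_
    have : coeff 0 (Ex ((d:A) * x) + Ex (d * (-x)) - 2) = 0 := by
      rw [map_sub, map_add, coeff_Ex, coeff_Ex]
      simp [show (2 : PowerSeries A) = C 2 from (map_ofNat C 2).symm]; ring
    rw [← map_natCast (C : A →+* _), coeff_C_mul, this, mul_zero]
  rw [coeff_succ_X_mul, map_sum, Ts, coeff_rescale, coeff_mk]
  have h2 : coeff (m+1) (2 : PowerSeries A) = 0 := by
    rw [show (2 : PowerSeries A) = C 2 from (map_ofNat C 2).symm, coeff_C]; simp
  simp only [← map_natCast (C : A →+* _), coeff_C_mul, Ex_pow, map_sub, map_add, h2, coeff_Ex, sub_zero]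
  simp only [eco, if_neg hn]
  by_cases hm : Even (m + 1)
  · have hodd : Odd m := by rw [Nat.even_add_one] at hm; simpa using hm
    have h2 : 2 ≤ m + 1 := by have := hodd.pos; omega
    rw [if_pos ⟨hm, h2⟩, mul_sum, mul_sum, sum_div, map_sum, mul_sum, mul_sum]
    refine sum_congr rfl fun d hd => ?_
    rw [Nat.add_sub_cancel, mul_neg, hm.neg_pow, mul_pow]
    have e : (n:ℚ) * (2 / (m.factorial : ℚ) * (d:ℚ) ^ m) / (m + 1) = 
        2 * ((n / d : ℕ) : ℚ) * (d:ℚ) ^ (m+1) * (1 / ((m+1).factorial : ℚ)) := by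
      obtain ⟨c, rfl⟩ := (Nat.mem_divisors.mp hd).1
      have : 0 < d := Nat.pos_of_mem_divisors hd
      rw [Nat.mul_div_cancel_left _ this, Nat.factorial_succ]
      push_cast
      have : (m.factorial : ℚ) ≠ 0 := by positivity
      have : (m + 1 : ℚ) ≠ 0 := by positivity
      field_simp
      ring
    rw [e]
    simp only [map_mul, map_pow, map_natCast, map_ofNat]
    ring
  · have hev : Odd (m+1) := by simpa using hm
    rw [if_neg (fun h => hm h.1)]
    symm
    rw [mul_zero, zero_div, map_zero, mul_zero, mul_zero]
    refine sum_eq_zero fun d _ => ?_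
    rw [mul_neg, hev.neg_pow]; ring

lemma Ws_eq (n : ℕ) (x y : A) : (C x * X + C y * X) * Ws n x y = Ss n x + Ss n y := by
  rw [← add_mul, ← map_add, mul_assoc]
  ext m
  rw [coeff_C_mul]
  rcases m with _ | m
  · rw [coeff_zero_X_mul, map_add, Ss, Ss, coeff_rescale, coeff_rescale]; simp only [coeff_mk, eco]; simp
  · rw [coeff_succ_X_mul, map_add, Ss, Ss, coeff_rescale, coeff_rescale, Ws, coeff_mk, coeff_mk, ← sum_mul,
      ← mul_assoc]
    have h := (Commute.all x (-y)).mul_geom_sum₂ (m+1)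
    rw [Nat.sum_antidiagonal_eq_sum_range_succ_mk]
    rw [sub_neg_eq_add] at h
    simp only [Nat.add_sub_cancel] at h
    simp only [Nat.succ_eq_add_one, h]
    by_cases hm : Even (m + 2)
    · have : Odd (m + 1) := by rw [show m + 2 = (m+1)+1 by ring, Nat.even_add_one] at hm; simpa using hm
      rw [this.neg_pow]; ring
    · have : eco (m+2) n = 0 := by simp only [eco]; rw [if_neg (fun h => hm h.1)]
      rw [show m + 1 + 1 = m + 2 by ring, this]; simp

lemma S0_eq (x : A) : C x * X * Ss 0 x = 1 - C (algebraMap ℚ A (1/2)) * (C x * X) - rescale x (bernoulliPowerSeries A) := by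
  have h : X * (PowerSeries.mk fun m => algebraMap ℚ A (eco (m+1) 0)) = 
      1 - C (algebraMap ℚ A (1/2)) * X - bernoulliPowerSeries A := by
    ext m
    rcases m with _ | _ | m
    · simp [bernoulliPowerSeries]
    · rw [coeff_succ_X_mul]
      simp only [coeff_mk, map_sub, coeff_one, coeff_C_mul, coeff_X, bernoulliPowerSeries, eco]
      norm_num [bernoulli_one]
    · rw [coeff_succ_X_mul]
      simp only [coeff_mk, map_sub, coeff_one, coeff_C_mul, coeff_X, bernoulliPowerSeries]
      simp only [eco]
      by_cases hm : Even (m + 2)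
      · simp [hm, neg_div]
      · have hodd : Odd (m+2) := by simpa using hm
        rw [if_neg (fun h => hm h.1), bernoulli_eq_zero_of_odd hodd (by omega)]
        simp
  have h2 := congrArg (rescale x) h
  have h3 : ∀ c : A, rescale x (C c) = C c := by
    intro c; ext m; rw [coeff_rescale, coeff_C]; split_ifs with h <;> simp [h]
  simp only [map_mul, map_sub, rescale_X, map_one, h3] at h2
  exact h2

lemma bern_eq (x : A) : rescale x (bernoulliPowerSeries A) * (Ex x - 1) = C x * X := by
  have h := congrArg (rescale x) (bernoulliPowerSeries_mul_exp_sub_one A)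
  simpa [rescale_X, Ex] using h

lemma eco_two (n : ℕ) : 3 * eco 2 n = 6 * ∑ d ∈ n.divisors, ((n / d : ℕ) : ℚ) - (if n = 0 then 1/4 else 0) := by
  by_cases hn : n = 0
  · subst hn; simp [eco, bernoulli_two]; norm_num
  · simp [eco, hn]
    rw [← Nat.sum_div_divisors n (fun d => (d:ℚ))]
    simp
    ring
end

lemma field_final {F : Type*} [Field F] [CharZero F] (a b c lx ly lz s0x s0y s0z sx sy sz
    tx ty tz wxy wyz wzx LL NH N δ cp cq cr: F) (ha : a ≠ 0) (hb : b ≠ 0) (hc : c ≠ 0)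
    (habc : a + b + c = 0)
    (hsx : sx = δ * s0x + lx) (hsy : sy = δ * s0y + ly) (hsz : sz = δ * s0z + lz)
    (h0x : s0x = 1/a - cp) (h0y : s0y = 1/b - cq) (h0z : s0z = 1/c - cr)
    (hcc : cp * cq + cq * cr + cr * cp = -1/4)
    (hLL : LL = NH + (lx * (cq + cr) + ly * (cr + cp) + lz * (cp + cq)))
    (hT : a * tx + b * ty + c * tz = NH - 6 * N)
    (hwxy : (a + b) * wxy = sx + sy) (hwyz : (b + c) * wyz = sy + sz) (hwzx : (c + a) * wzx = sz + sx) :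
    LL + ((s0x * ly + lx * s0y) + (s0y * lz + ly * s0z) + (s0z * lx + lz * s0x))
     + δ * (s0x * s0y + s0y * s0z + s0z * s0x)
     + ((a * ty + b * tx) + (b * tz + c * ty) + (c * tx + a * tz)) + (wxy + wyz + wzx) = 6 * N - δ / 4 := by
  have e1 : wxy = - (sx + sy) / c := by
    rw [← hwxy]; field_simp; linear_combination  wxy * habc
  have e2 : wyz = - (sy + sz) / a := by
    rw [← hwyz]; field_simp; linear_combination  wyz * habc
  have e3 : wzx = - (sz + sx) / b := by
    rw [← hwzx]; field_simp; linear_combination  wzx * habc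
  have hT' : (a * ty + b * tx) + (b * tz + c * ty) + (c * tx + a * tz) = - (NH - 6 * N) := by
    linear_combination (tx + ty + tz) * habc - hT
  have hi : 1 / a * (1 / b) + 1 / b * (1 / c) + 1 / c * (1 / a) = 0 := by
    field_simp; linear_combination habc
  rw [hT', hLL, e1, e2, e3, hsx, hsy, hsz, h0x, h0y, h0z]
  linear_combination δ * hcc - δ * hi

section
variable {A : Type*} [CommRing A] [Algebra ℚ A]
open PowerSeries

noncomputable def Vs (n : ℕ) (x y : A) : PowerSeries A :=
  ∑ m ∈ antidiagonal n, Ss m.1 x * Ss m.2 y + (C x * X * Ts n y + C y * X * Ts n x) + Ws n x y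

lemma SS_eq (n : ℕ) (x y : A) : ∑ m ∈ antidiagonal n, Ss m.1 x * Ss m.2 y =
    ∑ m ∈ antidiagonal n, Ls m.1 x * Ls m.2 y + (Ss 0 x * Ls n y + Ls n x * Ss 0 y)
      + (if n = 0 then 1 else 0) * (Ss 0 x * Ss 0 y) := by
  have : ∀ m : ℕ × ℕ, Ss m.1 x * Ss m.2 y = Ls m.1 x * Ls m.2 y + 
     (if m.1 = 0 then 1 else 0) * (Ss 0 x * Ls m.2 y) + (if m.2 = 0 then 1 else 0) * (Ls m.1 x * Ss 0 y)
     + (if m.1 = 0 then 1 else 0) * ((if m.2 = 0 then 1 else 0) * (Ss 0 x * Ss 0 y)) := by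
    intro m
    rw [Ss_eq m.1, Ss_eq m.2]
    split_ifs <;> ring
  simp_rw [this]
  rw [sum_add_distrib, sum_add_distrib, sum_add_distrib]
  have k1 : ∀ f : ℕ × ℕ → PowerSeries A, ∑ m ∈ antidiagonal n, (if m.1 = 0 then 1 else 0) * f m = f (0, n) := by
    intro f
    rw [sum_eq_single (0, n)]
    · simp
    · rintro ⟨i, j⟩ h hne
      rw [HasAntidiagonal.mem_antidiagonal] at h
      rw [if_neg, zero_mul]
      rintro h0; apply hne; simp only [Prod.mk.injEq]; simp only at h h0; omega
    · intro h; simp at h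
  have k2 : ∀ f : ℕ × ℕ → PowerSeries A, ∑ m ∈ antidiagonal n, (if m.2 = 0 then 1 else 0) * f m = f (n, 0) := by
    intro f
    rw [sum_eq_single (n, 0)]
    · simp
    · rintro ⟨i, j⟩ h hne
      rw [HasAntidiagonal.mem_antidiagonal] at h
      rw [if_neg, zero_mul]
      rintro h0; apply hne; simp only [Prod.mk.injEq]; simp only at h h0; omega
    · intro h; simp at h
  rw [k1 (fun m => Ss 0 x * Ls m.2 y), k2 (fun m => Ls m.1 x * Ss 0 y), k1]
  ring

variable [IsDomain A]

lemma Ex_ne_one (x : A) (hx : x ≠ 0) : Ex x ≠ 1 := by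
  intro h
  have := congrArg (coeff 1) h
  rw [coeff_Ex, coeff_one] at this
  simp at this
  exact hx this

theorem Vs_cyc_aux {F : Type*} [Field F] (ι : PowerSeries A →+* F) (hι : Function.Injective ι)
    (n : ℕ) (x y z : A) (h : x + y + z = 0) (hx : x ≠ 0) (hy : y ≠ 0) (hz : z ≠ 0) :
    Vs n x y + Vs n y z + Vs n z x = C (algebraMap ℚ A (3 * eco 2 n)) := by
  have : CharZero A := algebraRat.charZero A
  have : CharZero (PowerSeries A) := by
    have : Function.Injective (C : A →+* PowerSeries A) := C_injective
    exact charZero_of_injective_ringHom this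
  have : CharZero F := charZero_of_injective_ringHom hι
  apply hι
  have hE : ∀ x : A, ι (Ex x) * ι (Ex (-x)) = 1 := by
    intro x; rw [← map_mul, ← Ex_add, add_neg_cancel, Ex_zero, map_one]
  have hinv : ∀ x : A, ι (Ex (-x)) = (ι (Ex x))⁻¹ := fun x => (inv_eq_of_mul_eq_one_right (hE x)).symm
  have hCX : ∀ x : A, x ≠ 0 → ι (C x * X) ≠ 0 := by
    intro x hx
    rw [map_ne_zero_iff _ hι]
    exact mul_ne_zero ((map_ne_zero_iff _ C_injective).mpr hx) X_ne_zero
  have hE1 : ∀ x : A, x ≠ 0 → ι (Ex x) ≠ 1 := by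
    intro x hx h
    exact Ex_ne_one x hx (hι (by rw [h, map_one]))
  have h0 : ∀ x : A, x ≠ 0 → ι (Ss 0 x) = 1 / ι (C x * X) - (ι (Ex x) + 1) / (ι (Ex x) - 1) / 2 := by
    intro x hx
    have e1 := congrArg ι (S0_eq x)
    have e2 := congrArg ι (bern_eq x)
    have e3 : ι (C (algebraMap ℚ A (1/2))) * 2 = 1 := by
      rw [show (2 : F) = ι (C (algebraMap ℚ A 2)) by simp, ← map_mul, ← map_mul, ← map_mul]; simp
    have n1 := hCX x hx
    have n2 : ι (Ex x) - 1 ≠ 0 := sub_ne_zero.mpr (hE1 x hx)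
    rw [map_mul ι, map_sub, map_sub, map_mul ι _ (C x * X), map_one] at e1
    rw [map_mul ι, map_sub, map_one] at e2
    generalize ι (C x * X) = a at *
    generalize ι (Ex x) = p at *
    generalize ι (rescale x (bernoulliPowerSeries A)) = B at *
    have e4 : B = a / (p - 1) := by field_simp; exact e2
    have e5 : ι (C (algebraMap ℚ A (1/2))) = 1 / 2 := by field_simp; exact e3
    have e6 : ι (Ss 0 x) = (1 - ι (C (algebraMap ℚ A (1/2))) * a - B) / a := by
      field_simp; rw [mul_comm]; exact e1
    rw [e6, e4, e5]
    field_simp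
    ring
  set p := ι (Ex x) with hp
  set q := ι (Ex y) with hq
  set r := ι (Ex z) with hr
  have hpqr : p * q * r = 1 := by
    rw [hp, hq, hr, ← map_mul, ← map_mul, ← Ex_add, ← Ex_add, h, Ex_zero, map_one]
  have hp1 := hE1 x hx
  have hq1 := hE1 y hy
  have hr1 := hE1 z hz
  have hL : ∀ n (x : A), ι (Ls n x) = ∑ d ∈ n.divisors, (ι (Ex x) ^ d - (ι (Ex x))⁻¹ ^ d) := by
    intro n x; simp [Ls, map_sum, hinv]
  have hTT : ∀ x : A, ι (C x * X) * ι (Ts n x) = 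
      ∑ d ∈ n.divisors, ((n / d : ℕ) : F) * (ι (Ex x) ^ d + (ι (Ex x))⁻¹ ^ d - 2) := by
    intro x
    rw [← map_mul, Ts_eq, map_sum]
    refine sum_congr rfl fun d _ => ?_
    simp only [map_mul, map_sub, map_add, map_pow, hinv, map_natCast, map_ofNat]
  have hS : ∀ x : A, ι (Ss n x) = (if n = 0 then 1 else 0) * ι (Ss 0 x) + ι (Ls n x) := by
    intro x
    rw [Ss_eq, map_add]
    split_ifs <;> simp
  have hcombo : ι (∑ m ∈ antidiagonal n, Ls m.1 x * Ls m.2 y) + ι (∑ m ∈ antidiagonal n, Ls m.1 y * Ls m.2 z)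
      + ι (∑ m ∈ antidiagonal n, Ls m.1 z * Ls m.2 x) =
      ∑ d ∈ n.divisors, ((n / d : ℕ) : F) * (p ^ d + p⁻¹ ^ d + q ^ d + q⁻¹ ^ d + r ^ d + r⁻¹ ^ d)
      + (ι (Ls n x) * ((q + 1) / (q - 1) / 2 + (r + 1) / (r - 1) / 2)
      + ι (Ls n y) * ((r + 1) / (r - 1) / 2 + (p + 1) / (p - 1) / 2)
      + ι (Ls n z) * ((p + 1) / (p - 1) / 2 + (q + 1) / (q - 1) / 2)) := by
    have hq0 : q ≠ 0 := by intro h; rw [h] at hpqr; simp at hpqr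
    have hp0 : p ≠ 0 := by intro h; rw [h] at hpqr; simp at hpqr
    have hr0 : r = p⁻¹ * q⁻¹ := by field_simp; linear_combination hpqr
    let H1 : ℕ → ℕ → F := fun a c => p ^ a * q ^ c + q ^ a * r ^ c + r ^ a * p ^ c
      + (p⁻¹ ^ a * q⁻¹ ^ c + q⁻¹ ^ a * r⁻¹ ^ c + r⁻¹ ^ a * p⁻¹ ^ c)
    let H2 : ℕ → ℕ → F := fun a c => p ^ a * q⁻¹ ^ c + q ^ a * r⁻¹ ^ c + r ^ a * p⁻¹ ^ c
      + (p⁻¹ ^ a * q ^ c + q⁻¹ ^ a * r ^ c + r⁻¹ ^ a * p ^ c)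
    have key := quad_comb n H1 H2
      (by intro a c; simp only [H1, H2, hr0, mul_pow, mul_inv, inv_inv, pow_add, inv_pow]; field_simp; ring)
      (by intro a c; simp only [H1, H2, hr0, mul_pow, mul_inv, inv_inv, pow_add, inv_pow]; field_simp; ring)
    have l1 : ι (∑ m ∈ antidiagonal n, Ls m.1 x * Ls m.2 y) + ι (∑ m ∈ antidiagonal n, Ls m.1 y * Ls m.2 z)
      + ι (∑ m ∈ antidiagonal n, Ls m.1 z * Ls m.2 x) = ∑ v ∈ Quad n, (H1 v.1 v.2.2.1 - H2 v.1 v.2.2.1) := by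
      rw [quad_sum n (fun a c => H1 a c - H2 a c)]
      simp only [map_sum, map_mul, hL, sum_mul_sum, ← sum_add_distrib]
      refine sum_congr rfl fun m _ => sum_congr rfl fun a _ => sum_congr rfl fun c _ => ?_
      simp only [H1, H2, ← hp, ← hq, ← hr]
      ring
    rw [l1, key]
    have l2 : ∀ m ∈ n.divisors, ∑ a ∈ Ico 1 m, H2 a (m - a) = _ := fun m hm =>
      conv_rel p q r hpqr hp1 hq1 hr1 H2 rfl m (Nat.pos_of_mem_divisors hm)
    rw [sum_congr rfl l2, hL, hL, hL, sum_mul, sum_mul, sum_mul, ← sum_add_distrib, ← sum_add_distrib,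
      ← sum_add_distrib, ← sum_sub_distrib]
    refine sum_congr rfl fun m _ => ?_
    have : H1 m m = p ^ m + p⁻¹ ^ m + q ^ m + q⁻¹ ^ m + r ^ m + r⁻¹ ^ m := by
      simp only [H1, hr0, mul_pow, mul_inv, inv_inv, inv_pow]; field_simp; ring
    rw [this, ← hp, ← hq, ← hr]
    ring
  have hsum : ι (C x * X) + ι (C y * X) + ι (C z * X) = 0 := by
    rw [← map_add, ← map_add, ← add_mul, ← add_mul, ← map_add, ← map_add, h]; simp
  have fin := field_final (ι (C x * X)) (ι (C y * X)) (ι (C z * X)) (ι (Ls n x)) (ι (Ls n y)) (ι (Ls n z))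
    (ι (Ss 0 x)) (ι (Ss 0 y)) (ι (Ss 0 z)) (ι (Ss n x)) (ι (Ss n y)) (ι (Ss n z))
    (ι (Ts n x)) (ι (Ts n y)) (ι (Ts n z)) (ι (Ws n x y)) (ι (Ws n y z)) (ι (Ws n z x))
    _ _ (∑ d ∈ n.divisors, ((n / d : ℕ) : F)) (if n = 0 then 1 else 0) _ _ _
    (hCX x hx) (hCX y hy) (hCX z hz) hsum (hS x) (hS y) (hS z) (h0 x hx) (h0 y hy) (h0 z hz)
    (cot_rel p q r hpqr hp1 hq1 hr1) hcombo
    (by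
      rw [hTT, hTT, hTT, ← sum_add_distrib, ← sum_add_distrib, mul_sum, ← sum_sub_distrib]
      refine sum_congr rfl fun d _ => ?_
      rw [← hp, ← hq, ← hr]
      ring)
    (by rw [← map_add, ← map_mul, Ws_eq, map_add]) (by rw [← map_add, ← map_mul, Ws_eq, map_add])
    (by rw [← map_add, ← map_mul, Ws_eq, map_add])
  have rhs : ι (C (algebraMap ℚ A (3 * eco 2 n))) = 6 * (∑ d ∈ n.divisors, ((n / d : ℕ) : F)) - (if n = 0 then 1 else 0) / 4 := by
    rw [eco_two]
    let j : ℚ →+* F := (ι.comp (C : A →+* PowerSeries A)).comp (algebraMap ℚ A)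
    change j _ = _
    split_ifs <;> simp
  rw [rhs, ← fin]
  simp only [Vs, SS_eq, map_add, map_mul]
  have : ι (if n = 0 then 1 else 0) = if n = 0 then 1 else 0 := by split_ifs <;> simp
  rw [this]
  ring

theorem Vs_cyc (n : ℕ) (x y z : A) (h : x + y + z = 0) (hx : x ≠ 0) (hy : y ≠ 0) (hz : z ≠ 0) :
    Vs n x y + Vs n y z + Vs n z x = C (algebraMap ℚ A (3 * eco 2 n)) :=
  Vs_cyc_aux (algebraMap (PowerSeries A) (FractionRing (PowerSeries A)))
    (IsFractionRing.injective _ _) n x y z h hx hy hz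
end

def vco (i j n : ℕ) : ℚ :=
  ∑ m ∈ antidiagonal n, eco i m.1 * eco j m.2 + (if i = 2 then n * eco j n / j else 0)
    + (if j = 2 then n * eco i n / i else 0) - (-1) ^ j * eco (i + j) n

section
open PowerSeries
lemma coeff_Vs {A : Type*} [CommRing A] [Algebra ℚ A] (n N : ℕ) (x y : A) :
    coeff N (Vs n x y) = ∑ p ∈ antidiagonal N, algebraMap ℚ A (vco (p.1+1) (p.2+1) n) * (x ^ p.1 * y ^ p.2) := by
  have hT1 : coeff N (C x * X * Ts n y) = ∑ p ∈ antidiagonal N,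
      algebraMap ℚ A (if p.1 + 1 = 2 then n * eco (p.2+1) n / ((p.2 + 1 : ℕ) : ℚ) else 0) * (x ^ p.1 * y ^ p.2) := by
    rw [coeff_mul]
    refine sum_congr rfl fun p _ => ?_
    rw [coeff_C_mul, coeff_X, Ts, coeff_rescale, coeff_mk]
    by_cases h : p.1 = 1
    · simp [h]; ring
    · simp [h]
  have hT2 : coeff N (C y * X * Ts n x) = ∑ p ∈ antidiagonal N,
      algebraMap ℚ A (if p.2 + 1 = 2 then n * eco (p.1+1) n / ((p.1 + 1 : ℕ) : ℚ) else 0) * (x ^ p.1 * y ^ p.2) := by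
    rw [mul_comm, coeff_mul]
    refine sum_congr rfl fun p _ => ?_
    rw [coeff_C_mul, coeff_X, Ts, coeff_rescale, coeff_mk]
    by_cases h : p.2 = 1
    · simp [h]; ring
    · simp [h]
  have hW : coeff N (Ws n x y) = ∑ p ∈ antidiagonal N,
      algebraMap ℚ A (- ((-1) ^ (p.2+1) * eco (p.1 + 1 + (p.2 + 1)) n)) * (x ^ p.1 * y ^ p.2) := by
    rw [Ws, coeff_mk]
    refine sum_congr rfl fun p hp => ?_
    rw [HasAntidiagonal.mem_antidiagonal] at hp
    rw [show p.1 + 1 + (p.2 + 1) = N + 2 by omega, neg_pow y, pow_succ]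
    simp only [map_neg, map_mul, map_pow, map_one]
    ring
  have hS : coeff N (∑ m ∈ antidiagonal n, Ss m.1 x * Ss m.2 y) = ∑ p ∈ antidiagonal N,
      algebraMap ℚ A (∑ m ∈ antidiagonal n, eco (p.1+1) m.1 * eco (p.2+1) m.2) * (x ^ p.1 * y ^ p.2) := by
    rw [map_sum]
    simp only [coeff_mul]
    rw [sum_comm]
    refine sum_congr rfl fun p _ => ?_
    rw [map_sum, sum_mul]
    refine sum_congr rfl fun m _ => ?_
    rw [Ss, Ss, coeff_rescale, coeff_rescale, coeff_mk, coeff_mk, map_mul]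
    ring
  rw [Vs, map_add, map_add, map_add, hT1, hT2, hW, hS, ← sum_add_distrib, ← sum_add_distrib, ← sum_add_distrib]
  refine sum_congr rfl fun p _ => ?_
  rw [vco, sub_eq_add_neg, map_add, map_add, map_add]
  ring
end

section
open MvPolynomial

lemma coeff_mv (a b c : Fin 3) (hab : a ≠ b) (hac : a ≠ c) (hbc : b ≠ c) (m n p q l : ℕ)
    (h : m + n = p + q + l) :
    coeff (Finsupp.single a p + Finsupp.single b q + Finsupp.single c l)
      ((X a - X b : MvPolynomial (Fin 3) ℚ) ^ m * (X c - X a) ^ n) =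
      (m.choose q : ℚ) * (n.choose l : ℚ) * (-1) ^ (m + p) := by
  have e1 : (X a - X b : MvPolynomial (Fin 3) ℚ) ^ m = ∑ u ∈ range (m+1),
      monomial (Finsupp.single b u + Finsupp.single a (m - u)) ((-1) ^ u * (m.choose u : ℚ)) := by
    rw [sub_eq_add_neg, add_comm, add_pow]
    refine sum_congr rfl fun u _ => ?_
    rw [neg_pow, X_pow_eq_monomial, X_pow_eq_monomial, ← map_natCast (C : ℚ →+* MvPolynomial (Fin 3) ℚ),
      show ((-1 : MvPolynomial (Fin 3) ℚ) ^ u) = C ((-1) ^ u) by simp, mul_comm, C_mul_monomial,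
      monomial_mul, C_mul_monomial]
    congr 1; ring
  have e2 : (X c - X a : MvPolynomial (Fin 3) ℚ) ^ n = ∑ v ∈ range (n+1),
      monomial (Finsupp.single c v + Finsupp.single a (n - v)) ((-1) ^ (n - v) * (n.choose v : ℚ)) := by
    rw [sub_eq_add_neg, add_pow]
    refine sum_congr rfl fun v _ => ?_
    rw [neg_pow, X_pow_eq_monomial, X_pow_eq_monomial, ← map_natCast (C : ℚ →+* MvPolynomial (Fin 3) ℚ),
      show ((-1 : MvPolynomial (Fin 3) ℚ) ^ (n-v)) = C ((-1) ^ (n-v)) by simp, mul_comm, C_mul_monomial,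
      monomial_mul, C_mul_monomial]
    congr 1; ring
  rw [e1, e2, sum_mul_sum]
  simp only [monomial_mul, coeff_sum, coeff_monomial]
  have hiff : ∀ u ∈ range (m+1), ∀ v ∈ range (n+1), ((Finsupp.single b u + Finsupp.single a (m - u)
      + (Finsupp.single c v + Finsupp.single a (n - v)) =
      Finsupp.single a p + Finsupp.single b q + Finsupp.single c l) ↔ (u = q ∧ v = l)) := by
    intro u hu v hv
    rw [mem_range] at hu hv
    constructor
    · intro h
      have h1 := DFunLike.congr_fun h b
      have h2 := DFunLike.congr_fun h c
      simp [hab, hac, hbc, hab.symm, hac.symm, hbc.symm] at h1 h2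
      exact ⟨h1, h2⟩
    · rintro ⟨rfl, rfl⟩
      have : p = (m - u) + (n - v) := by omega
      rw [this, Finsupp.single_add]
      abel
  have : ∀ u ∈ range (m+1), ∀ v ∈ range (n+1), (if (Finsupp.single b u + Finsupp.single a (m - u)
      + (Finsupp.single c v + Finsupp.single a (n - v)) =
      Finsupp.single a p + Finsupp.single b q + Finsupp.single c l) then
      (-1) ^ u * (m.choose u : ℚ) * ((-1) ^ (n - v) * (n.choose v : ℚ)) else 0) =
      (if u = q then (-1) ^ u * (m.choose u : ℚ) else 0) * (if v = l then ((-1) ^ (n - v) * (n.choose v : ℚ)) else 0) := by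
    intro u hu v hv
    simp only [hiff u hu v hv]
    by_cases h1 : u = q <;> by_cases h2 : v = l <;> simp [h1, h2]
  rw [sum_congr rfl fun u hu => sum_congr rfl fun v hv => this u hu v hv, ← sum_mul_sum, sum_ite_eq', sum_ite_eq']
  by_cases hq : q < m + 1
  · by_cases hl : l < n + 1
    · rw [if_pos (mem_range.mpr hq), if_pos (mem_range.mpr hl)]
      have : (-1 : ℚ) ^ (m + p) = (-1) ^ q * (-1) ^ (n - l) := by
        rw [← pow_add]
        have h2 : m + p = q + (n - l) + 2 * (m - q) := by omega
        rw [h2, pow_add, pow_mul]; simp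
      rw [this]; ring
    · rw [if_neg (show l ∉ range (n+1) by simpa using hl), Nat.choose_eq_zero_of_lt (show n < l by omega)]; simp
  · rw [if_neg (by simpa using hq), Nat.choose_eq_zero_of_lt (show m < q by omega)]; simp

theorem vco_rel (r s t n : ℕ) (h : 1 ≤ r + s + t) :
    ∑ p ∈ antidiagonal (r + s + t), ((p.1.choose t : ℚ) * (p.2.choose s : ℚ) * (-1) ^ (p.1 + r)) * vco (p.1+1) (p.2+1) n
    + ∑ p ∈ antidiagonal (r + s + t), ((p.1.choose r : ℚ) * (p.2.choose t : ℚ) * (-1) ^ (p.1 + s)) * vco (p.1+1) (p.2+1) n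
    + ∑ p ∈ antidiagonal (r + s + t), ((p.1.choose s : ℚ) * (p.2.choose r : ℚ) * (-1) ^ (p.1 + t)) * vco (p.1+1) (p.2+1) n
     = 0 := by
  have hne : ∀ i j : Fin 3, i ≠ j → (X i - X j : MvPolynomial (Fin 3) ℚ) ≠ 0 := by
    intro i j hij h
    exact hij (X_injective (sub_eq_zero.mp h))
  have key := Vs_cyc n (X 0 - X 2 : MvPolynomial (Fin 3) ℚ) (X 1 - X 0) (X 2 - X 1) (by ring)
    (hne _ _ (by decide)) (hne _ _ (by decide)) (hne _ _ (by decide))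
  have k2 := congrArg (PowerSeries.coeff (r + s + t)) key
  rw [map_add, map_add, coeff_Vs, coeff_Vs, coeff_Vs, PowerSeries.coeff_C, if_neg (by omega)] at k2
  have k3 := congrArg (coeff (Finsupp.single 0 r + Finsupp.single 1 s + Finsupp.single 2 t)) k2
  rw [coeff_add, coeff_add, coeff_sum, coeff_sum, coeff_sum, coeff_zero] at k3
  rw [← k3]
  congr 1
  · congr 1
    · refine sum_congr rfl fun p hp => ?_
      rw [HasAntidiagonal.mem_antidiagonal] at hp
      rw [algebraMap_eq, coeff_C_mul, mul_comm]
      congr 1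
      rw [← coeff_mv 0 2 1 (by decide) (by decide) (by decide) p.1 p.2 r t s (by omega)]
      congr 1; abel
    · refine sum_congr rfl fun p hp => ?_
      rw [HasAntidiagonal.mem_antidiagonal] at hp
      rw [algebraMap_eq, coeff_C_mul, mul_comm]
      congr 1
      rw [← coeff_mv 1 0 2 (by decide) (by decide) (by decide) p.1 p.2 s r t (by omega)]
      congr 1; abel
  · refine sum_congr rfl fun p hp => ?_
    rw [HasAntidiagonal.mem_antidiagonal] at hp
    rw [algebraMap_eq, coeff_C_mul, mul_comm]
    congr 1
    rw [← coeff_mv 2 1 0 (by decide) (by decide) (by decide) p.1 p.2 t s r (by omega)]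
    congr 1; abel
end

lemma eco_bound (k n : ℕ) : ‖(eco k n : ℂ)‖ ≤ ‖(eco k 0 : ℂ)‖ + 2 * (n : ℝ) ^ k := by
  have hb : (0:ℝ) ≤ 2 * (n : ℝ) ^ k := by positivity
  by_cases hk : Even k ∧ 2 ≤ k
  swap
  · simp [eco, hk]
  by_cases hn : n = 0
  · subst hn; linarith
  have h1 : (eco k n : ℂ) = ((2 / ((k-1).factorial : ℝ) * ((ArithmeticFunction.sigma (k-1) n : ℕ) : ℝ) : ℝ) : ℂ) := by
    simp [eco, hk, hn, ArithmeticFunction.sigma_apply]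
  have h2 : ((ArithmeticFunction.sigma (k-1) n : ℕ) : ℝ) ≤ (n:ℝ) ^ k := by
    have := ArithmeticFunction.sigma_le_pow_succ (k-1) n
    rw [show k - 1 + 1 = k by omega] at this
    exact_mod_cast this
  have h3 : (2 / ((k-1).factorial : ℝ)) ≤ 2 := by
    apply div_le_self (by norm_num)
    exact_mod_cast Nat.factorial_pos _
  rw [h1, Complex.norm_real, Real.norm_eq_abs, abs_of_nonneg (by positivity)]
  have := norm_nonneg (eco k 0 : ℂ)
  have : 2 / ((k-1).factorial : ℝ) * ((ArithmeticFunction.sigma (k-1) n : ℕ) : ℝ) ≤ 2 * (n:ℝ)^k :=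
    mul_le_mul h3 h2 (by positivity) (by norm_num)
  linarith

lemma summ_bound (k : ℕ) (ρ : ℝ) (h0 : 0 ≤ ρ) (h1 : ρ < 1) :
    Summable (fun n : ℕ => (‖(eco k 0 : ℂ)‖ + 2 * (n : ℝ) ^ k) * ρ ^ n) := by
  have a := (summable_geometric_of_lt_one h0 h1).mul_left ‖(eco k 0 : ℂ)‖
  have b := (summable_pow_mul_geometric_of_norm_lt_one k (r := ρ)
    (by rwa [Real.norm_eq_abs, abs_of_nonneg h0])).mul_left 2
  refine (a.add b).congr fun n => ?_
  ring

lemma eco_summable (k : ℕ) (w : ℂ) (h : ‖w‖ < 1) : Summable (fun n : ℕ => ‖(eco k n : ℂ) * w ^ n‖) := by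
  refine Summable.of_nonneg_of_le (fun _ => norm_nonneg _) (fun n => ?_) (summ_bound k ‖w‖ (norm_nonneg _) h)
  rw [norm_mul, norm_pow]
  gcongr
  exact eco_bound k n

lemma q_norm (τ : ℂ) : ‖Complex.exp (2 * Real.pi * Complex.I * τ)‖ = Real.exp (-(2 * Real.pi * τ.im)) := by
  rw [Complex.norm_exp]; simp

lemma q_norm_lt (τ : ℂ) (hτ : 0 < τ.im) : ‖Complex.exp (2 * Real.pi * Complex.I * τ)‖ < 1 := by
  rw [q_norm, Real.exp_lt_one_iff]
  have := Real.pi_pos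
  have : 0 < 2 * Real.pi * τ.im := by positivity
  linarith

lemma Eis_eq (k : ℕ) (τ : ℂ) (hτ : 0 < τ.im) :
    Eis k τ = ∑' n : ℕ, (eco k n : ℂ) * Complex.exp (2 * Real.pi * Complex.I * τ) ^ n := by
  by_cases hk : Even k ∧ 2 ≤ k
  swap
  · simp [Eis, eco, hk]
  rw [((eco_summable k _ (q_norm_lt τ hτ)).of_norm).tsum_eq_zero_add, Eis, if_pos hk, mul_add, ← tsum_mul_left]
  congr 1
  · simp only [eco, if_pos hk, if_true, pow_zero, mul_one]
    push_cast
    obtain ⟨j, rfl⟩ : ∃ j, k = j + 1 := ⟨k - 1, by omega⟩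
    rw [Nat.factorial_succ, Nat.add_sub_cancel]
    have : (j.factorial : ℂ) ≠ 0 := by exact_mod_cast j.factorial_ne_zero
    have : ((j:ℂ) + 1) ≠ 0 := by exact_mod_cast Nat.succ_ne_zero j
    push_cast
    field_simp
  · refine tsum_congr fun n => ?_
    simp only [eco, if_pos hk, if_neg (Nat.succ_ne_zero n)]
    push_cast
    ring

lemma Eis'_hasSum (k : ℕ) (τ : ℂ) (hτ : 0 < τ.im) :
    HasSum (fun n : ℕ => (n : ℂ) * (eco k n : ℂ) * Complex.exp (2 * Real.pi * Complex.I * τ) ^ n) (Eis' k τ) := by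
  let U : Set ℂ := {w | τ.im / 2 < w.im}
  have hU : IsOpen U := isOpen_lt continuous_const Complex.continuous_im
  have hτU : τ ∈ U := by change τ.im / 2 < τ.im; linarith
  have hpi := Real.pi_pos
  have H := hasSum_deriv_of_summable_norm (U := U) (z := τ)
    (F := fun (n : ℕ) (w : ℂ) => (eco k n : ℂ) * Complex.exp (2 * Real.pi * Complex.I * w) ^ n)
    (summ_bound k (Real.exp (-(2 * Real.pi * (τ.im / 2)))) (Real.exp_pos _).le
      (by rw [Real.exp_lt_one_iff]; have : 0 < 2 * Real.pi * (τ.im / 2) := by positivity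
          linarith))
    (by intro n; apply Differentiable.differentiableOn; fun_prop) hU
    (by
      intro n w hw
      rw [norm_mul, norm_pow, q_norm]
      have : τ.im / 2 < w.im := hw
      gcongr
      exact eco_bound k n) hτU
  have hd : deriv (Eis k) τ = deriv (fun w => ∑' n : ℕ, (eco k n : ℂ) * Complex.exp (2 * Real.pi * Complex.I * w) ^ n) τ := by
    apply Filter.EventuallyEq.deriv_eq
    filter_upwards [hU.mem_nhds hτU] with w hw
    have : τ.im / 2 < w.im := hw
    exact Eis_eq k w (by linarith)
  rw [Eis', hd]
  have H2 := H.mul_left (2 * Real.pi * Complex.I)⁻¹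
  refine H2.congr_fun ?_ 
  intro n
  have hder : HasDerivAt (fun w : ℂ => (eco k n : ℂ) * Complex.exp (2 * Real.pi * Complex.I * w) ^ n)
     ((eco k n : ℂ) * (Complex.exp (2 * Real.pi * Complex.I * τ) ^ n * (n * (2 * Real.pi * Complex.I)))) τ := by
    have e : (fun w : ℂ => (eco k n : ℂ) * Complex.exp (2 * Real.pi * Complex.I * w) ^ n) = 
       fun w => (eco k n : ℂ) * Complex.exp ((n * (2 * Real.pi * Complex.I)) * w) := by
      funext w; rw [← Complex.exp_nat_mul]; ring_nf
    rw [e, ← Complex.exp_nat_mul, show (n:ℂ) * (2 * Real.pi * Complex.I * τ) = n * (2 * Real.pi * Complex.I) * τ by ring]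
    have := (((hasDerivAt_id τ).const_mul ((n:ℂ) * (2 * Real.pi * Complex.I))).cexp).const_mul (eco k n : ℂ)
    simpa using this
  rw [hder.deriv]
  have : (2 * Real.pi * Complex.I : ℂ) ≠ 0 := Complex.two_pi_I_ne_zero
  field_simp

lemma Pf_hasSum (i j : ℕ) (τ : ℂ) (hτ : 0 < τ.im) :
    HasSum (fun n : ℕ => (vco i j n : ℂ) * Complex.exp (2 * Real.pi * Complex.I * τ) ^ n)
      (Pf i j τ - (-1) ^ j * Eis (i + j) τ) := by
  set w := Complex.exp (2 * Real.pi * Complex.I * τ) with hw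
  have hw1 : ‖w‖ < 1 := q_norm_lt τ hτ
  have hE : ∀ k, HasSum (fun n : ℕ => (eco k n : ℂ) * w ^ n) (Eis k τ) := by
    intro k
    rw [Eis_eq k τ hτ]
    exact (eco_summable k w hw1).of_norm.hasSum
  have hprod : HasSum (fun n : ℕ => ∑ m ∈ antidiagonal n, ((eco i m.1 : ℂ) * w ^ m.1) * ((eco j m.2 : ℂ) * w ^ m.2))
      (Eis i τ * Eis j τ) := by
    rw [Eis_eq i τ hτ, Eis_eq j τ hτ,
      tsum_mul_tsum_eq_tsum_sum_antidiagonal_of_summable_norm (eco_summable i w hw1) (eco_summable j w hw1)]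
    exact (summable_norm_sum_mul_antidiagonal_of_summable_norm (eco_summable i w hw1)
      (eco_summable j w hw1)).of_norm.hasSum
  have h1 : HasSum (fun n : ℕ => if i = 2 then (n : ℂ) * (eco j n : ℂ) * w ^ n / j else 0)
      (if i = 2 then Eis' j τ / j else 0) := by
    split_ifs
    · exact (Eis'_hasSum j τ hτ).div_const _
    · exact hasSum_zero
  have h2 : HasSum (fun n : ℕ => if j = 2 then (n : ℂ) * (eco i n : ℂ) * w ^ n / i else 0)
      (if j = 2 then Eis' i τ / i else 0) := by
    split_ifs
    · exact (Eis'_hasSum i τ hτ).div_const _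
    · exact hasSum_zero
  have h3 := (hE (i + j)).mul_left ((-1 : ℂ) ^ j)
  have := ((hprod.add h1).add h2).sub h3
  rw [Pf]
  refine this.congr_fun ?_
  intro n
  have e1 : ∑ m ∈ antidiagonal n, ((eco i m.1 : ℂ) * w ^ m.1) * ((eco j m.2 : ℂ) * w ^ m.2) =
      (∑ m ∈ antidiagonal n, (eco i m.1 : ℂ) * (eco j m.2 : ℂ)) * w ^ n := by
    rw [sum_mul]
    refine sum_congr rfl fun m hm => ?_
    rw [HasAntidiagonal.mem_antidiagonal] at hm
    rw [← hm, pow_add]; ring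
  rw [e1, vco]
  push_cast
  split_ifs <;> push_cast <;> ring

lemma sum_conv (N : ℕ) (f : ℕ → ℂ) (g : ℕ × ℕ → ℂ) (h : ∀ a b, a + b = N → f (a + 1) = g (a, b)) :
    ∑ i ∈ Finset.Icc 1 (N + 1), f i = ∑ p ∈ antidiagonal N, g p := by
  have e : ∑ i ∈ Finset.Icc 1 (N + 1), f i = ∑ i ∈ range (N+1), f (i + 1) := by
    rw [Finset.sum_bij' (fun i _ => i - 1) (fun i _ => i + 1)] <;> simp <;> intros <;>
      first | omega | (congr 1; omega)
  rw [e, Nat.sum_antidiagonal_eq_sum_range_succ_mk]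
  refine sum_congr rfl fun a ha => ?_
  rw [mem_range] at ha
  exact h a (N - a) (by omega)

/-- Theorem 1 of Hirose–Sato–Tasaka: for positive integers `r, s, t ≥ 1` with
`k = r + s + t - 1 ≥ 3` and `τ` in the upper half-plane, the three alternating
binomial sums of `P_{i,j} - (-1)^j E_{i+j}` vanish. -/
theorem eisenstein_product_relation (r s t : ℕ) (hr : 1 ≤ r) (hs : 1 ≤ s) (ht : 1 ≤ t)
    (k : ℕ) (hk : k = r + s + t - 1) (hk3 : 3 ≤ k) (τ : ℂ) (hτ : 0 < τ.im) :
    0 = (∑ i ∈ Finset.Icc 1 (k - 1), ((i - 1).choose (t - 1) : ℂ) *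
          ((k - i - 1).choose (s - 1) : ℂ) * (-1) ^ (i + r) *
          (Pf i (k - i) τ - (-1) ^ (k - i) * Eis (i + (k - i)) τ))
      + (∑ j ∈ Finset.Icc 1 (k - 1), ((j - 1).choose (r - 1) : ℂ) *
          ((k - j - 1).choose (t - 1) : ℂ) * (-1) ^ (j + s) *
          (Pf j (k - j) τ - (-1) ^ (k - j) * Eis (j + (k - j)) τ))
      + (∑ h ∈ Finset.Icc 1 (k - 1), ((h - 1).choose (s - 1) : ℂ) *
          ((k - h - 1).choose (r - 1) : ℂ) * (-1) ^ (h + t) *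
          (Pf h (k - h) τ - (-1) ^ (k - h) * Eis (h + (k - h)) τ)) := by
  obtain ⟨r, rfl⟩ : ∃ r', r = r' + 1 := ⟨r - 1, by omega⟩
  obtain ⟨s, rfl⟩ : ∃ s', s = s' + 1 := ⟨s - 1, by omega⟩
  obtain ⟨t, rfl⟩ : ∃ t', t = t' + 1 := ⟨t - 1, by omega⟩
  obtain rfl : k = r + s + t + 2 := by omega
  have hN : 1 ≤ r + s + t := by omega
  have conv : ∀ a b c : ℕ, ∑ i ∈ Finset.Icc 1 (r + s + t + 2 - 1), ((i - 1).choose (a + 1 - 1) : ℂ) *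
          ((r + s + t + 2 - i - 1).choose (b + 1 - 1) : ℂ) * (-1) ^ (i + (c + 1)) *
          (Pf i (r + s + t + 2 - i) τ - (-1) ^ (r + s + t + 2 - i) * Eis (i + (r + s + t + 2 - i)) τ) =
      ∑ p ∈ antidiagonal (r + s + t), ((p.1.choose a : ℂ) * (p.2.choose b : ℂ) * (-1) ^ (p.1 + c)) *
        (Pf (p.1 + 1) (p.2 + 1) τ - (-1) ^ (p.2 + 1) * Eis (p.1 + 1 + (p.2 + 1)) τ) := by
    intro a b c
    rw [show r + s + t + 2 - 1 = r + s + t + 1 by omega]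
    refine sum_conv (r + s + t) _ (fun p => ((p.1.choose a : ℂ) * (p.2.choose b : ℂ) * (-1) ^ (p.1 + c)) *
        (Pf (p.1 + 1) (p.2 + 1) τ - (-1) ^ (p.2 + 1) * Eis (p.1 + 1 + (p.2 + 1)) τ)) ?_
    intro u v huv
    rw [show r + s + t + 2 - (u + 1) = v + 1 by omega]
    simp only [Nat.add_sub_cancel]
    rw [show u + 1 + (c + 1) = u + c + 2 by ring, pow_add _ (u + c) 2]
    simp
  rw [conv t s r, conv r t s, conv s r t]
  have hs : ∀ a b c : ℕ, HasSum (fun n : ℕ => ∑ p ∈ antidiagonal (r + s + t),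
      ((p.1.choose a : ℂ) * (p.2.choose b : ℂ) * (-1) ^ (p.1 + c)) *
        ((vco (p.1 + 1) (p.2 + 1) n : ℂ) * Complex.exp (2 * Real.pi * Complex.I * τ) ^ n))
      (∑ p ∈ antidiagonal (r + s + t), ((p.1.choose a : ℂ) * (p.2.choose b : ℂ) * (-1) ^ (p.1 + c)) *
        (Pf (p.1 + 1) (p.2 + 1) τ - (-1) ^ (p.2 + 1) * Eis (p.1 + 1 + (p.2 + 1)) τ)) := by
    intro a b c
    exact hasSum_sum fun p _ => (Pf_hasSum (p.1 + 1) (p.2 + 1) τ hτ).mul_left _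
  have tot := ((hs t s r).add (hs r t s)).add (hs s r t)
  refine HasSum.unique ?_ tot
  convert (hasSum_zero : HasSum (fun _ : ℕ => (0 : ℂ)) 0) using 1
  funext n
  have key := congrArg (fun v : ℚ => (v : ℂ)) (vco_rel r s t n hN)
  push_cast at key
  simp only [← mul_assoc, ← sum_mul, ← add_mul]
  simp only [mul_assoc] at key ⊢
  rw [key, zero_mul]
end

section
/- For all integers r, s, t ≥ 3 with k = r+s+t−1 and every τ in the complex upper half-plane, 0 = Σ_{i+j=k, i,j≥3} C(i−1,t−1)C(j−1,s−1)(−1)^{i+r} (E_i(τ)E_j(τ) − (−1)^j E_{i+j}(τ)) + Σ_{j+h=k, j,h≥3} C(j−1,r−1)C(h−1,t−1)(−1)^{j+s} (E_j(τ)E_h(τ) − (−1)^h E_{j+h}(τ)) + Σ_{h+i=k, h,i≥3} C(h−1,s−1)C(i−1,r−1)(−1)^{h+t} (E_h(τ)E_i(τ) − (−1)^i E_{h+i}(τ)), where C(a,b) denotes the binomial coefficient. -/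
open Complex Finset Filter

lemma hst_geom {M : Type*} [CommRing M] [IsDomain M] (a b c P Q W : M) (n : ℕ)
    (h1 : (P - Q) * c = (W - P) * b) (h2 : (Q - W) * a = (P - Q) * c)
    (hD : (P - Q) * c ≠ 0) :
    a * b * (∑ i ∈ range (n + 1), P ^ i * Q ^ (n - i))
      + b * c * (∑ i ∈ range (n + 1), Q ^ i * W ^ (n - i))
      + c * a * (∑ i ∈ range (n + 1), W ^ i * P ^ (n - i)) = 0 := by
  have g (x y : M) : (∑ i ∈ range (n + 1), x ^ i * y ^ (n - i)) * (x - y)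
      = x ^ (n + 1) - y ^ (n + 1) := by
    simpa using (Commute.all x y).geom_sum₂_mul (n + 1)
  have g1 := g P Q
  have g2 := g Q W
  have g3 := g W P
  generalize (∑ i ∈ range (n + 1), P ^ i * Q ^ (n - i)) = s1 at *
  generalize (∑ i ∈ range (n + 1), Q ^ i * W ^ (n - i)) = s2 at *
  generalize (∑ i ∈ range (n + 1), W ^ i * P ^ (n - i)) = s3 at *
  apply mul_left_cancel₀ hD
  linear_combination a * b * c * g1 + a * b * c * g2 + a * b * c * g3 - b * c * s2 * h2 + c * a * s3 * h1

open MvPolynomial in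
lemma hst_coeff (p q r : Fin 3) (hpq : p ≠ q) (hqr : q ≠ r) (hpr : p ≠ r)
    (R S T i j : ℕ) (h : i + j = R + S + T) :
    coeff (Finsupp.single p R + Finsupp.single q S + Finsupp.single r T)
      ((X p - X r : MvPolynomial (Fin 3) ℂ) ^ i * (X q - X p) ^ j)
      = (i.choose T : ℂ) * (j.choose S : ℂ) * (-1) ^ (i + R) := by
  have e1 : (X p - X r : MvPolynomial (Fin 3) ℂ) ^ i = ∑ m ∈ range (i + 1),
      monomial (Finsupp.single r m + Finsupp.single p (i - m)) ((-1) ^ m * (i.choose m : ℂ)) := by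
    rw [show (X p - X r : MvPolynomial (Fin 3) ℂ) = -X r + X p by ring, add_pow]
    refine sum_congr rfl fun m _ => ?_
    rw [neg_pow, X_pow_eq_monomial, X_pow_eq_monomial, ← C_eq_coe_nat,
      show (-1 : MvPolynomial (Fin 3) ℂ) ^ m = C ((-1) ^ m) by simp, C_mul_monomial,
      monomial_mul, mul_comm, C_mul_monomial]
    simp [mul_comm]
  have e2 : (X q - X p : MvPolynomial (Fin 3) ℂ) ^ j = ∑ m ∈ range (j + 1),
      monomial (Finsupp.single q m + Finsupp.single p (j - m))
        ((-1) ^ (j - m) * (j.choose m : ℂ)) := by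
    rw [show (X q - X p : MvPolynomial (Fin 3) ℂ) = X q + -X p by ring, add_pow]
    refine sum_congr rfl fun m _ => ?_
    rw [neg_pow (X p : MvPolynomial (Fin 3) ℂ), X_pow_eq_monomial, X_pow_eq_monomial, ← C_eq_coe_nat,
      show (-1 : MvPolynomial (Fin 3) ℂ) ^ (j - m) = C ((-1) ^ (j - m)) by simp, C_mul_monomial,
      monomial_mul, mul_comm, C_mul_monomial]
    simp [mul_comm]
  rw [e1, e2, sum_mul_sum, coeff_sum]
  simp_rw [coeff_sum, monomial_mul, coeff_monomial]
  have key : ∀ m ∈ range (i + 1), ∀ l ∈ range (j + 1),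
      ((Finsupp.single r m + Finsupp.single p (i - m) +
        (Finsupp.single q l + Finsupp.single p (j - l)) =
      (Finsupp.single p R + Finsupp.single q S + Finsupp.single r T : Fin 3 →₀ ℕ)) ↔
        (m = T ∧ l = S)) := by
    intro m hm l hl
    simp only [mem_range] at hm hl
    constructor
    · intro hh
      have h1 := DFunLike.congr_fun hh r
      have h2 := DFunLike.congr_fun hh q
      simp [hqr, hpq.symm, hqr.symm, hpr.symm] at h1 h2
      exact ⟨h1, h2⟩
    · rintro ⟨rfl, rfl⟩
      have : R = (i - m) + (j - l) := by omega
      rw [this, Finsupp.single_add]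
      abel
  have : ∀ m ∈ range (i + 1), ∀ l ∈ range (j + 1),
      (if (Finsupp.single r m + Finsupp.single p (i - m) +
        (Finsupp.single q l + Finsupp.single p (j - l)) =
      (Finsupp.single p R + Finsupp.single q S + Finsupp.single r T : Fin 3 →₀ ℕ)) then
        (-1) ^ m * (i.choose m : ℂ) * ((-1) ^ (j - l) * (j.choose l : ℂ)) else 0) =
      if m = T then (if l = S then (-1) ^ m * (i.choose m : ℂ) * ((-1) ^ (j - l) * (j.choose l : ℂ)) else 0) else 0 := by
    intro m hm l hl
    rw [if_congr (key m hm l hl) rfl rfl, ite_and]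
  rw [sum_congr rfl fun m hm => sum_congr rfl fun l hl => this m hm l hl]
  rw [sum_comm]
  simp only [sum_ite_eq', mem_range]
  by_cases hT : T < i + 1
  · by_cases hS : S < j + 1
    · simp only [hT, hS, if_true, sum_ite_eq', mem_range]
      have : (-1 : ℂ) ^ (i + R) = (-1) ^ T * (-1) ^ (j - S) := by
        rw [← pow_add, show i + R = 2 * (i - T) + (T + (j - S)) by omega, pow_add, pow_mul]
        simp
      rw [this]; ring
    · simp [hS, Nat.choose_eq_zero_of_lt (show j < S by omega)]
  · simp [hT, Nat.choose_eq_zero_of_lt (show i < T by omega)]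

open MvPolynomial in
lemma hst_coeff_sum (p q r : Fin 3) (hpq : p ≠ q) (hqr : q ≠ r) (hpr : p ≠ r)
    (R S T n : ℕ) (h : n = R + S + T) (a b : ℂ) :
    coeff (Finsupp.single p R + Finsupp.single q S + Finsupp.single r T)
      (C a * C b * ∑ i ∈ range (n + 1), (C a * (X p - X r : MvPolynomial (Fin 3) ℂ)) ^ i *
        (C b * (X q - X p)) ^ (n - i))
      = ∑ i ∈ range (n + 1), (i.choose T : ℂ) * ((n - i).choose S : ℂ) * (-1) ^ (i + R) *
        (a ^ (i + 1) * b ^ (n - i + 1)) := by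
  rw [mul_sum, coeff_sum]
  refine sum_congr rfl fun i hi => ?_
  rw [mem_range] at hi
  have : C a * C b * ((C a * (X p - X r : MvPolynomial (Fin 3) ℂ)) ^ i *
        (C b * (X q - X p)) ^ (n - i)) = C (a ^ (i + 1) * b ^ (n - i + 1)) *
        ((X p - X r : MvPolynomial (Fin 3) ℂ) ^ i * (X q - X p) ^ (n - i)) := by
    simp only [C_mul, C_pow, mul_pow]
    ring
  rw [this, coeff_C_mul, hst_coeff p q r hpq hqr hpr R S T i (n - i) (by omega)]
  ring

open MvPolynomial in
lemma hst_point (u v w : ℂ) (hu : u ≠ 0) (hv : v ≠ 0) (hw : w ≠ 0) (h : u + v + w = 0)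
    (R S T n : ℕ) (hn : n = R + S + T) :
    (∑ i ∈ range (n + 1), (i.choose T : ℂ) * ((n - i).choose S : ℂ) * (-1) ^ (i + R) *
        (u⁻¹ ^ (i + 1) * v⁻¹ ^ (n - i + 1)))
    + (∑ i ∈ range (n + 1), (i.choose R : ℂ) * ((n - i).choose T : ℂ) * (-1) ^ (i + S) *
        (v⁻¹ ^ (i + 1) * w⁻¹ ^ (n - i + 1)))
    + (∑ i ∈ range (n + 1), (i.choose S : ℂ) * ((n - i).choose R : ℂ) * (-1) ^ (i + T) *
        (w⁻¹ ^ (i + 1) * u⁻¹ ^ (n - i + 1))) = 0 := by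
  have hr : u⁻¹ * v⁻¹ + v⁻¹ * w⁻¹ + w⁻¹ * u⁻¹ = 0 := by
    field_simp
    linear_combination h
  have ha := inv_ne_zero hu
  have hc := inv_ne_zero hw
  generalize u⁻¹ = a at *
  generalize v⁻¹ = b at *
  generalize w⁻¹ = c at *
  rw [← hst_coeff_sum 0 1 2 (by decide) (by decide) (by decide) R S T n hn,
    ← hst_coeff_sum 1 2 0 (by decide) (by decide) (by decide) S T R n (by omega),
    ← hst_coeff_sum 2 0 1 (by decide) (by decide) (by decide) T R S n (by omega),
    show (Finsupp.single 1 S + Finsupp.single 2 T + Finsupp.single 0 R : Fin 3 →₀ ℕ) =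
      Finsupp.single 0 R + Finsupp.single 1 S + Finsupp.single 2 T by abel,
    show (Finsupp.single 2 T + Finsupp.single 0 R + Finsupp.single 1 S : Fin 3 →₀ ℕ) =
      Finsupp.single 0 R + Finsupp.single 1 S + Finsupp.single 2 T by abel,
    ← coeff_add, ← coeff_add]
  have hC : (C a * C b + C b * C c + C c * C a : MvPolynomial (Fin 3) ℂ) = 0 := by
    rw [← C_mul, ← C_mul, ← C_mul, ← C_add, ← C_add, hr, C_0]
  rw [hst_geom, coeff_zero]
  · linear_combination (X 0 - X 2) * hC
  · linear_combination (X 1 - X 0) * hC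
  · rw [← sub_ne_zero] at *
    intro h0
    have := congrArg (MvPolynomial.eval ![0, 0, 1]) h0
    simp at this
    simp_all

lemma hst_point' (u v w : ℂ) (hu : u ≠ 0) (hv : v ≠ 0) (hw : w ≠ 0) (h : u + v + w = 0)
    (r s t k : ℕ) (hr : 3 ≤ r) (hs : 3 ≤ s) (ht : 3 ≤ t) (hk : k = r + s + t - 1) :
    (∑ i ∈ Icc 3 (k - 3), ((i - 1).choose (t - 1) : ℂ) * ((k - i - 1).choose (s - 1) : ℂ) *
        (-1) ^ (i + r) * (u⁻¹ ^ i * v⁻¹ ^ (k - i)))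
    + (∑ i ∈ Icc 3 (k - 3), ((i - 1).choose (r - 1) : ℂ) * ((k - i - 1).choose (t - 1) : ℂ) *
        (-1) ^ (i + s) * (v⁻¹ ^ i * w⁻¹ ^ (k - i)))
    + (∑ i ∈ Icc 3 (k - 3), ((i - 1).choose (s - 1) : ℂ) * ((k - i - 1).choose (r - 1) : ℂ) *
        (-1) ^ (i + t) * (w⁻¹ ^ i * u⁻¹ ^ (k - i))) = 0 := by
  have conv (r s t : ℕ) (hr : 3 ≤ r) (hs : 3 ≤ s) (ht : 3 ≤ t) (hk : k = r + s + t - 1)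
      (a b : ℂ) :
      (∑ i ∈ Icc 3 (k - 3), ((i - 1).choose (t - 1) : ℂ) * ((k - i - 1).choose (s - 1) : ℂ) *
        (-1) ^ (i + r) * (a ^ i * b ^ (k - i))) =
      ∑ i ∈ range (k - 2 + 1), (i.choose (t - 1) : ℂ) * ((k - 2 - i).choose (s - 1) : ℂ) *
        (-1) ^ (i + (r - 1)) * (a ^ (i + 1) * b ^ (k - 2 - i + 1)) := by
    have e : ∑ i ∈ range (k - 2 + 1), (i.choose (t - 1) : ℂ) * ((k - 2 - i).choose (s - 1) : ℂ) *
        (-1) ^ (i + (r - 1)) * (a ^ (i + 1) * b ^ (k - 2 - i + 1)) =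
        ∑ i ∈ range (k - 2 + 1), (fun i => ((i - 1).choose (t - 1) : ℂ) *
          ((k - i - 1).choose (s - 1) : ℂ) * (-1) ^ (i + r) * (a ^ i * b ^ (k - i))) (i + 1) := by
      refine sum_congr rfl fun i hi => ?_
      rw [mem_range] at hi
      simp only
      rw [show i + 1 - 1 = i by omega, show k - (i + 1) - 1 = k - 2 - i by omega,
        show k - (i + 1) = k - 2 - i + 1 by omega, show i + 1 + r = i + (r - 1) + 2 by omega,
        pow_add (-1 : ℂ) _ 2]
      norm_num
    rw [e, range_eq_Ico]
    refine Eq.trans ?_ (sum_Ico_add' (fun i => ((i - 1).choose (t - 1) : ℂ) *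
          ((k - i - 1).choose (s - 1) : ℂ) * (-1) ^ (i + r) * (a ^ i * b ^ (k - i))) 0 (k - 2 + 1) 1).symm
    refine sum_subset ?_ ?_
    · intro i hi
      simp only [mem_Icc, mem_Ico] at *
      omega
    · intro i hi hi'
      simp only [mem_Icc, mem_Ico] at *
      by_cases h3 : i < 3
      · rw [Nat.choose_eq_zero_of_lt (show i - 1 < t - 1 by omega)]
        simp
      · rw [Nat.choose_eq_zero_of_lt (show k - i - 1 < s - 1 by omega)]
        simp
  rw [conv r s t hr hs ht hk, conv s t r hs ht hr (by omega), conv t r s ht hr hs (by omega)]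
  exact hst_point u v w hu hv hw h (r - 1) (s - 1) (t - 1) (k - 2) (by omega)

/-- inverse lattice point -/
noncomputable def hstE (τ : ℂ) (v : Fin 2 → ℤ) : ℂ := ((v 0 : ℂ) * τ + v 1)⁻¹

/-- full lattice sum -/
noncomputable def hstG (τ : ℂ) (k : ℕ) : ℂ := ∑' v : Fin 2 → ℤ, hstE τ v ^ k

lemma hstE_neg (τ : ℂ) (v : Fin 2 → ℤ) : hstE τ (-v) = - hstE τ v := by
  simp only [hstE, Pi.neg_apply, Int.cast_neg]
  rw [← inv_neg]
  ring

lemma hst_lin_zero (τ : ℂ) (hτ : 0 < τ.im) (v : Fin 2 → ℤ) (h : (v 0 : ℂ) * τ + v 1 = 0) :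
    v = 0 := by
  have h0 : v 0 = 0 := by
    have := congrArg Complex.im h
    simp at this
    rcases this with h | h
    · exact h
    · exact absurd h hτ.ne'
  rw [h0] at h
  have h1 : v 1 = 0 := by simpa using h
  ext i
  fin_cases i
  · exact h0
  · exact h1

lemma hstE_eq (τ : ℂ) (hτ : 0 < τ.im) (k : ℕ) (v : Fin 2 → ℤ) :
    EisensteinSeries.eisSummand k v ⟨τ, hτ⟩ = hstE τ v ^ k := by
  simp [EisensteinSeries.eisSummand, hstE]

lemma hstE_summable (τ : ℂ) (hτ : 0 < τ.im) (k : ℕ) (hk : 3 ≤ k) :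
    Summable fun v => ‖hstE τ v ^ k‖ := by
  have := EisensteinSeries.summable_norm_eisSummand (k := k) (by exact_mod_cast hk) ⟨τ, hτ⟩
  simpa only [hstE_eq] using this

lemma hstG_eq (τ : ℂ) (hτ : 0 < τ.im) (k : ℕ) (hk : 3 ≤ k) :
    hstG τ k = (2 * Real.pi * Complex.I) ^ k * Eis k τ := by
  by_cases he : Even k
  · have h1 := tsum_eisSummand_eq_tsum_sigma_mul_cexp_pow hk he ⟨τ, hτ⟩
    simp only [hstE_eq] at h1
    rw [tsum_pnat_eq_tsum_succ (f := fun n => ((ArithmeticFunction.sigma (k - 1) n : ℕ) : ℂ) *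
      Complex.exp (2 * Real.pi * Complex.I * τ) ^ n)] at h1
    simp only [ArithmeticFunction.sigma_apply] at h1
    push_cast at h1
    rw [hstG, h1, Eis, if_pos ⟨he, by omega⟩]
    generalize (∑' n : ℕ, (∑ d ∈ (n + 1).divisors, (d : ℂ) ^ (k - 1)) *
          Complex.exp (2 * Real.pi * Complex.I * τ) ^ (n + 1)) = Q
    have hz : 2 * riemannZeta k = (2 * Real.pi * Complex.I) ^ k *
        ((2 / (Nat.factorial (k - 1) : ℂ)) * (-(bernoulli k : ℂ) / (2 * k))) := by
      obtain ⟨m, hm⟩ := he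
      obtain ⟨l, rfl⟩ : ∃ l, m = l + 1 := ⟨m - 1, by omega⟩
      obtain rfl : k = 2 * (l + 1) := by omega
      have hf : (2 * (l + 1)).factorial = (2 * (l + 1)) * (2 * (l + 1) - 1).factorial := by
        rw [Nat.mul_factorial_pred (by omega)]
      have hf0 : ((2 * (l + 1) - 1).factorial : ℂ) ≠ 0 := by
        exact_mod_cast Nat.factorial_ne_zero _
      have hl : (l : ℂ) + 1 ≠ 0 := by exact_mod_cast Nat.succ_ne_zero l
      have hz' := riemannZeta_two_mul_nat (k := l + 1) (by omega)
      rw [Nat.cast_mul, Nat.cast_two, hz', hf, mul_pow, mul_pow, pow_mul Complex.I, Complex.I_sq,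
        show 2 * (l + 1) - 1 = 2 * l + 1 by omega] at *
      push_cast
      field_simp
      ring
    rw [hz, show (-2 * Real.pi * Complex.I : ℂ) = -(2 * Real.pi * Complex.I) by ring,
      he.neg_pow]
    ring
  · rw [Eis, if_neg (fun h => he h.1), mul_zero, hstG]
    have ho : Odd k := Nat.not_even_iff_odd.mp he
    have h1 : ∑' v : Fin 2 → ℤ, hstE τ v ^ k = ∑' v : Fin 2 → ℤ, hstE τ (-v) ^ k :=
      ((Equiv.neg (Fin 2 → ℤ)).tsum_eq (fun v => hstE τ v ^ k)).symm
    simp only [hstE_neg, ho.neg_pow, tsum_neg] at h1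
    exact self_eq_neg.mp h1

lemma hstT_hasSum (τ : ℂ) (hτ : 0 < τ.im) (i j : ℕ) (hi : 3 ≤ i) (hj : 3 ≤ j) :
    HasSum (fun p : (Fin 2 → ℤ) × (Fin 2 → ℤ) =>
      if p.1 + p.2 = 0 then 0 else hstE τ p.1 ^ i * hstE τ p.2 ^ j)
      (hstG τ i * hstG τ j - (-1) ^ j * hstG τ (i + j)) := by
  have h1 : HasSum (fun p : (Fin 2 → ℤ) × (Fin 2 → ℤ) => hstE τ p.1 ^ i * hstE τ p.2 ^ j)
      (hstG τ i * hstG τ j) := by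
    rw [hstG, hstG, tsum_mul_tsum_of_summable_norm (hstE_summable τ hτ i hi)
      (hstE_summable τ hτ j hj)]
    exact (summable_mul_of_summable_norm (hstE_summable τ hτ i hi)
      (hstE_summable τ hτ j hj)).hasSum
  have h2 : HasSum (fun p : (Fin 2 → ℤ) × (Fin 2 → ℤ) =>
      if p.1 + p.2 = 0 then hstE τ p.1 ^ i * hstE τ p.2 ^ j else 0)
      ((-1) ^ j * hstG τ (i + j)) := by
    have hg : Function.Injective (fun v : Fin 2 → ℤ => (v, -v)) := by
      intro v w h
      exact (Prod.ext_iff.mp h).1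
    refine (hg.hasSum_iff ?_).mp ?_
    · rintro ⟨v, w⟩ hx
      refine if_neg fun h => hx ⟨v, ?_⟩
      simp only at h
      rw [eq_neg_of_add_eq_zero_right h]
    · have := (hstE_summable τ hτ (i + j) (by omega)).of_norm.hasSum.mul_left ((-1 : ℂ) ^ j)
      refine Eq.mpr (congrArg (fun f => HasSum f _) (funext fun v => ?_)) this
      simp only [Function.comp, add_neg_cancel, if_true, hstE_neg]
      rw [neg_pow (hstE τ v), pow_add (hstE τ v)]
      ring
  refine Eq.mpr (congrArg (fun f => HasSum f _) (funext fun p => ?_)) (h1.sub h2)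
  split_ifs <;> simp

lemma hst_lattice (r s t : ℕ) (hr : 3 ≤ r) (hs : 3 ≤ s) (ht : 3 ≤ t)
    (k : ℕ) (hk : k = r + s + t - 1) (τ : ℂ) (hτ : 0 < τ.im) :
    0 = (∑ i ∈ Finset.Icc 3 (k - 3), ((i - 1).choose (t - 1) : ℂ) *
          ((k - i - 1).choose (s - 1) : ℂ) * (-1) ^ (i + r) *
          (hstG τ i * hstG τ (k - i) - (-1) ^ (k - i) * hstG τ (i + (k - i))))
      + (∑ j ∈ Finset.Icc 3 (k - 3), ((j - 1).choose (r - 1) : ℂ) *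
          ((k - j - 1).choose (t - 1) : ℂ) * (-1) ^ (j + s) *
          (hstG τ j * hstG τ (k - j) - (-1) ^ (k - j) * hstG τ (j + (k - j))))
      + (∑ h ∈ Finset.Icc 3 (k - 3), ((h - 1).choose (s - 1) : ℂ) *
          ((k - h - 1).choose (r - 1) : ℂ) * (-1) ^ (h + t) *
          (hstG τ h * hstG τ (k - h) - (-1) ^ (k - h) * hstG τ (h + (k - h)))) := by
  let σ : (Fin 2 → ℤ) × (Fin 2 → ℤ) ≃ (Fin 2 → ℤ) × (Fin 2 → ℤ) :=
    { toFun := fun p => (p.2, -p.1 - p.2)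
      invFun := fun p => (-p.1 - p.2, p.1)
      left_inv := fun p => by ext <;> simp <;> ring
      right_inv := fun p => by ext <;> simp }
  have hT (i : ℕ) (hi : i ∈ Icc 3 (k - 3)) := hstT_hasSum τ hτ i (k - i)
    (by rw [mem_Icc] at hi; omega) (by rw [mem_Icc] at hi; omega)
  have hT2 (i : ℕ) (hi : i ∈ Icc 3 (k - 3)) := σ.hasSum_iff.mpr (hT i hi)
  have hT3 (i : ℕ) (hi : i ∈ Icc 3 (k - 3)) := σ.hasSum_iff.mpr (hT2 i hi)
  have H := ((hasSum_sum fun i hi => (hT i hi).mul_left (((i - 1).choose (t - 1) : ℂ) *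
          ((k - i - 1).choose (s - 1) : ℂ) * (-1) ^ (i + r))).add
    (hasSum_sum fun i hi => (hT2 i hi).mul_left (((i - 1).choose (r - 1) : ℂ) *
          ((k - i - 1).choose (t - 1) : ℂ) * (-1) ^ (i + s)))).add
    (hasSum_sum fun i hi => (hT3 i hi).mul_left (((i - 1).choose (s - 1) : ℂ) *
          ((k - i - 1).choose (r - 1) : ℂ) * (-1) ^ (i + t)))
  refine HasSum.unique ?_ H
  refine Eq.mpr (congrArg (fun f => HasSum f _) (funext fun p => ?_)) (hasSum_zero (α := ℂ))
  obtain ⟨v, w⟩ := p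
  simp only [Function.comp, σ, Equiv.coe_fn_mk]
  have e1 : w + (-v - w) = -v := by abel
  have e2 : -w - (-v - w) = v := by abel
  have e3 : -v - w + v = -w := by abel
  simp only [e1, e2, e3]
  have z0 : hstE τ 0 = 0 := by simp [hstE]
  have key (i : ℕ) (hi : i ∈ Icc 3 (k - 3)) : i ≠ 0 ∧ k - i ≠ 0 := by
    rw [mem_Icc] at hi; omega
  by_cases hv : v = 0
  · subst hv
    simp only [neg_zero, if_true, mul_zero, sum_const_zero, add_zero, z0]
    refine (congrArg₂ (· + ·) (sum_eq_zero fun i hi => ?_) (sum_eq_zero fun i hi => ?_)).trans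
      (add_zero 0) <;> simp [key i hi]
  by_cases hw : w = 0
  · subst hw
    simp only [neg_zero, if_true, mul_zero, sum_const_zero, add_zero, z0]
    refine (congrArg₂ (· + ·) (sum_eq_zero fun i hi => ?_) (sum_eq_zero fun i hi => ?_)).trans
      (add_zero 0) <;> simp [key i hi]
  by_cases hvw : v + w = 0
  · have : -v - w = 0 := by rw [← neg_add', hvw, neg_zero]
    simp only [hvw, this, if_true, mul_zero, sum_const_zero, zero_add, z0]
    refine (congrArg₂ (· + ·) (sum_eq_zero fun i hi => ?_) (sum_eq_zero fun i hi => ?_)).trans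
      (add_zero 0) <;> simp [key i hi]
  simp only [hvw, neg_eq_zero, hv, hw, if_false]
  refine hst_point' _ _ _ ?_ ?_ ?_ ?_ r s t k hr hs ht hk
  · exact fun h => hv (hst_lin_zero τ hτ v h)
  · exact fun h => hw (hst_lin_zero τ hτ w h)
  · intro h
    have := hst_lin_zero τ hτ _ h
    rw [← neg_add', neg_eq_zero] at this
    exact hvw this
  · simp
    ring

/-- Equation (4) of Hirose–Sato–Tasaka. -/
theorem eisenstein_relation_high_weight (r s t : ℕ) (hr : 3 ≤ r) (hs : 3 ≤ s) (ht : 3 ≤ t)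
    (k : ℕ) (hk : k = r + s + t - 1) (τ : ℂ) (hτ : 0 < τ.im) :
    0 = (∑ i ∈ Finset.Icc 3 (k - 3), ((i - 1).choose (t - 1) : ℂ) *
          ((k - i - 1).choose (s - 1) : ℂ) * (-1) ^ (i + r) *
          (Eis i τ * Eis (k - i) τ - (-1) ^ (k - i) * Eis (i + (k - i)) τ))
      + (∑ j ∈ Finset.Icc 3 (k - 3), ((j - 1).choose (r - 1) : ℂ) *
          ((k - j - 1).choose (t - 1) : ℂ) * (-1) ^ (j + s) *
          (Eis j τ * Eis (k - j) τ - (-1) ^ (k - j) * Eis (j + (k - j)) τ))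
      + (∑ h ∈ Finset.Icc 3 (k - 3), ((h - 1).choose (s - 1) : ℂ) *
          ((k - h - 1).choose (r - 1) : ℂ) * (-1) ^ (h + t) *
          (Eis h τ * Eis (k - h) τ - (-1) ^ (k - h) * Eis (h + (k - h)) τ)) := by
  have hc : (2 * Real.pi * Complex.I : ℂ) ^ k ≠ 0 :=
    pow_ne_zero _ Complex.two_pi_I_ne_zero
  apply mul_left_cancel₀ hc
  rw [mul_zero, mul_add, mul_add, mul_sum, mul_sum, mul_sum]
  rw [hst_lattice r s t hr hs ht k hk τ hτ]
  have e (i : ℕ) (hi : i ∈ Icc 3 (k - 3)) (A : ℂ) :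
      A * (hstG τ i * hstG τ (k - i) - (-1) ^ (k - i) * hstG τ (i + (k - i))) =
      (2 * Real.pi * Complex.I) ^ k *
      (A * (Eis i τ * Eis (k - i) τ - (-1) ^ (k - i) * Eis (i + (k - i)) τ)) := by
    rw [mem_Icc] at hi
    rw [hstG_eq τ hτ i (by omega), hstG_eq τ hτ (k - i) (by omega),
      hstG_eq τ hτ (i + (k - i)) (by omega), pow_add (2 * Real.pi * Complex.I : ℂ),
      show (2 * Real.pi * Complex.I : ℂ) ^ k =
        (2 * Real.pi * Complex.I) ^ i * (2 * Real.pi * Complex.I) ^ (k - i) by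
        rw [← pow_add]; congr 1; omega]
    ring
  rw [sum_congr rfl fun i hi => e i hi _, sum_congr rfl fun i hi => e i hi _,
    sum_congr rfl fun i hi => e i hi _]
end

section
/- For every even integer k ≥ 2 and every τ in the complex upper half-plane, the q-series Eisenstein series satisfies E_k(τ) = lim_{M→∞} Σ_{m=−M}^{M} F_k(m,τ), i.e. (2/(k−1)!)(−B_k/(2k) + Σ_{n≥1} σ_{k−1}(n) q^n) equals the symmetric iterated lattice sum lim_{M→∞} Σ_{m=−M}^{M} (2π√−1)^{−k} lim_{N→∞} Σ_{n=−N,…,N, (m,n)≠(0,0)} (mτ+n)^{−k}. -/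
open Complex Finset Filter

open UpperHalfPlane in
lemma inner_succ (k : ℕ) (hk : Even k) (hk2 : 2 ≤ k) (τ : ℂ) (hτ : 0 < τ.im) (m : ℕ) :
    ∑' n : ℤ, (((m + 1 : ℕ) : ℤ) * τ + n : ℂ) ^ (-(k : ℤ)) =
      (2 * Real.pi * Complex.I) ^ k / (Nat.factorial (k - 1) : ℂ) *
      ∑' n : ℕ+, (n : ℂ) ^ (k - 1) *
        Complex.exp (2 * Real.pi * Complex.I * τ) ^ ((m + 1) * n : ℕ) := by
  have him : 0 < (((m : ℂ) + 1) * τ).im := by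
    simp only [mul_im, add_re, natCast_re, one_re, add_im, natCast_im, one_im, add_zero, zero_mul]
    positivity
  have H := EisensteinSeries.qExpansion_identity_pnat (k := k - 1) (by omega)
    ⟨((m : ℂ) + 1) * τ, him⟩
  rw [show k - 1 + 1 = k by omega] at H
  have h1 : (-2 * Real.pi * Complex.I) ^ k = (2 * Real.pi * Complex.I) ^ k := by
    rw [show (-2 * Real.pi * Complex.I) = -(2 * Real.pi * Complex.I) by ring, hk.neg_pow]
  rw [h1] at H
  convert H using 2
  · ext n
    simp [zpow_neg]
  · refine tsum_congr fun n => ?_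
    congr 1
    rw [← Complex.exp_nat_mul, ← Complex.exp_nat_mul]
    congr 1
    push_cast
    ring

lemma inner_zero (k : ℕ) (hk : Even k) (hk2 : 2 ≤ k) (τ : ℂ) :
    ∑' n : ℤ, (((0 : ℕ) : ℤ) * τ + n : ℂ) ^ (-(k : ℤ)) =
      (2 * Real.pi * Complex.I) ^ k * ((2 / (Nat.factorial (k - 1) : ℂ)) *
        (-(bernoulli k : ℂ) / (2 * k))) := by
  have h := two_mul_riemannZeta_eq_tsum_int_inv_pow_of_even (k := k) (by omega) hk
  have h0 : ∑' n : ℤ, (((0 : ℕ) : ℤ) * τ + n : ℂ) ^ (-(k : ℤ)) = 2 * riemannZeta k := by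
    rw [h]
    exact tsum_congr fun n => by simp [zpow_neg]
  rw [h0]
  obtain ⟨m, rfl⟩ : ∃ m, k = 2 * (m + 1) := by
    obtain ⟨r, hr⟩ := hk
    exact ⟨r - 1, by omega⟩
  have hz := riemannZeta_two_mul_nat (show m + 1 ≠ 0 by omega)
  rw [Nat.cast_mul 2 (m + 1), Nat.cast_two, hz,
    show 2 * (m + 1) - 1 = 2 * m + 1 by omega,
    show (2 * (m + 1)).factorial = (2 * m + 2) * (2 * m + 1).factorial from
      Nat.factorial_succ (2 * m + 1), mul_pow, mul_pow, pow_mul I, I_sq]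
  have hf : ((2 * m + 1).factorial : ℂ) ≠ 0 := by exact_mod_cast Nat.factorial_ne_zero _
  have hm : (m + 1 : ℂ) ≠ 0 := by exact_mod_cast Nat.succ_ne_zero m
  have hm2 : (2 * m + 2 : ℂ) ≠ 0 := by exact_mod_cast Nat.succ_ne_zero (2 * m + 1)
  push_cast
  field_simp
  ring

lemma outer_tendsto (k : ℕ) (q : ℂ) (hq : ‖q‖ < 1) :
    Tendsto (fun N : ℕ => ∑ m ∈ range N, ∑' n : ℕ+, (n : ℂ) ^ k * q ^ ((m + 1) * n : ℕ)) atTop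
      (nhds (∑' n : ℕ, (∑ d ∈ (n + 1).divisors, (d : ℂ) ^ k) * q ^ (n + 1))) := by
  have h := tsum_prod_pow_eq_tsum_sigma k hq
  rw [tsum_pnat_eq_tsum_succ (f := fun d ↦ ∑' c : ℕ+, (c : ℂ) ^ k * q ^ (d * c : ℕ)),
    tsum_pnat_eq_tsum_succ (f := fun e ↦ (ArithmeticFunction.sigma k e : ℂ) * q ^ e)] at h
  have h2 : ∑' n : ℕ, (∑ d ∈ (n + 1).divisors, (d : ℂ) ^ k) * q ^ (n + 1) =
      ∑' n : ℕ, (ArithmeticFunction.sigma k (n + 1) : ℂ) * q ^ (n + 1) :=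
    tsum_congr fun n => by simp [ArithmeticFunction.sigma_apply]
  rw [h2, ← h]
  refine Summable.tendsto_sum_tsum_nat ?_
  rw [← summable_pnat_iff_summable_succ (f := fun b ↦ ∑' c : ℕ+, (c : ℂ) ^ k * q ^ (b * c : ℕ))]
  exact (summable_prod_mul_pow k hq).prod

/-- The Eisenstein series `E_k` (as a `q`-series) equals the symmetric iterated
lattice sum `lim_{M→∞} Σ_{m=-M}^{M} F_k(m,τ)`, where
`F_k(m,τ) = (2π√-1)^{-k} lim_{N→∞} Σ_{n=-N,…,N, (m,n)≠(0,0)} (mτ+n)^{-k}`. -/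
theorem eisenstein_eq_lattice_sum (k : ℕ) (hk : Even k) (hk2 : 2 ≤ k)
    (τ : ℂ) (hτ : 0 < τ.im) :
    ∃ F : ℤ → ℂ,
      (∀ m : ℤ, Filter.Tendsto
        (fun N : ℕ => (2 * Real.pi * Complex.I) ^ (-(k : ℤ)) *
          ∑ n ∈ (Finset.Icc (-(N : ℤ)) N).filter (fun n => (m, n) ≠ (0, 0)),
            ((m : ℂ) * τ + n) ^ (-(k : ℤ)))
        Filter.atTop (nhds (F m))) ∧
      Filter.Tendsto (fun M : ℕ => ∑ m ∈ Finset.Icc (-(M : ℤ)) M, F m)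
        Filter.atTop (nhds (Eis k τ)) := by
  have hc : (2 * Real.pi * Complex.I : ℂ) ≠ 0 := Complex.two_pi_I_ne_zero
  set S : ℤ → ℂ := fun m => ∑' n : ℤ, ((m : ℂ) * τ + n) ^ (-(k : ℤ)) with hS
  have hsum : ∀ m : ℤ, Summable fun n : ℤ => ((m : ℂ) * τ + n) ^ (-(k : ℤ)) := fun m => by
    simpa [zpow_neg] using EisensteinSeries.linear_right_summable τ m (k := k) (by exact_mod_cast hk2)
  refine ⟨fun m => (2 * Real.pi * Complex.I) ^ (-(k : ℤ)) * S m, fun m => ?_, ?_⟩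
  · refine Tendsto.const_mul _ ?_
    have h1 := SummationFilter.hasSum_symmetricIcc_iff.mp
      ((hsum m).hasSum.mono_left (SummationFilter.LeAtTop.le_atTop (L := SummationFilter.symmetricIcc ℤ)))
    refine h1.congr fun N => ?_
    symm
    refine Finset.sum_filter_of_ne fun n _ hn h => hn ?_
    simp only [Prod.mk.injEq] at h
    obtain ⟨rfl, rfl⟩ := h
    have : k ≠ 0 := by omega
    simp [this]
  · have heven : S.Even := fun m => by
      simp only [hS]
      rw [← tsum_comp_neg]
      refine tsum_congr fun n => ?_
      rw [zpow_neg, zpow_neg, zpow_natCast, zpow_natCast, ← hk.neg_pow]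
      congr 2
      push_cast
      ring
    have hq : ‖Complex.exp (2 * Real.pi * Complex.I * τ)‖ < 1 :=
      UpperHalfPlane.norm_exp_two_pi_I_lt_one ⟨τ, hτ⟩
    have h := (outer_tendsto (k - 1) _ hq).const_mul (2 / (Nat.factorial (k - 1) : ℂ))
    have h' := h.const_add ((2 / (Nat.factorial (k - 1) : ℂ)) * (-(bernoulli k : ℂ) / (2 * k)))
    rw [Eis, if_pos ⟨hk, hk2⟩, mul_add]
    refine h'.congr fun M => ?_
    rw [← Finset.mul_sum, Finset.sum_Icc_of_even_eq_range heven, Finset.sum_range_succ']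
    have e0 : S ((0 : ℕ) : ℤ) = _ := inner_zero k hk hk2 τ
    have e1 : ∀ m : ℕ, S ((m + 1 : ℕ) : ℤ) = _ := inner_succ k hk hk2 τ hτ
    simp only [e1]
    have e0' : S 0 = _ := e0
    rw [e0, e0', ← Finset.mul_sum, zpow_neg, zpow_natCast, two_nsmul]
    field_simp
    ring
end

section
/- For every integer k ≥ 3 and every τ in the complex upper half-plane, lim_{M→∞} Σ_{m=−M}^{M} m·F_k(m,τ) = −E_{k−1}'(τ)/(k−1). -/
open Complex Finset Filter

lemma wls_summable (p : ℕ) {r : ℂ} (hr : ‖r‖ < 1) :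
    Summable fun c : ℕ+ × ℕ+ ↦ ((c.1 * c.2 : ℕ) : ℂ) * ((c.2 : ℂ) ^ p * r ^ (c.1 * c.2 : ℕ)) := by
  set s : ℝ := Real.sqrt ‖r‖ with hs
  have hs0 : 0 ≤ s := Real.sqrt_nonneg _
  have hs2 : s * s = ‖r‖ := Real.mul_self_sqrt (norm_nonneg _)
  have hs1 : s < 1 := by nlinarith
  have hsn : ‖s‖ < 1 := by rwa [Real.norm_of_nonneg hs0]
  have h1 := summable_prod_mul_pow (𝕜 := ℝ) p hsn
  have h2 := (summable_pow_mul_geometric_of_norm_lt_one 1 hsn).tendsto_atTop_zero.bddAbove_range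
  obtain ⟨C, hC⟩ := h2
  refine Summable.of_norm_bounded (h1.mul_left C) fun c ↦ ?_
  have h3 : ((c.1 * c.2 : ℕ) : ℝ) ^ 1 * s ^ (c.1 * c.2 : ℕ) ≤ C := hC ⟨(c.1 * c.2 : ℕ), rfl⟩
  rw [norm_mul, norm_mul, norm_pow, norm_pow, Complex.norm_natCast, ← hs2, mul_pow]
  have h4 : ‖((c.2 : ℕ) : ℂ)‖ = ((c.2 : ℕ) : ℝ) := Complex.norm_natCast _
  rw [h4]
  have h5 : 0 ≤ ((c.2 : ℕ) : ℝ) ^ p * s ^ (c.1 * c.2 : ℕ) := by positivity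
  calc _ = (((c.1 * c.2 : ℕ) : ℝ) ^ 1 * s ^ (c.1 * c.2 : ℕ)) *
      (((c.2 : ℕ) : ℝ) ^ p * s ^ (c.1 * c.2 : ℕ)) := by ring
    _ ≤ _ := mul_le_mul_of_nonneg_right h3 h5

lemma wls_hasSum (p : ℕ) {r : ℂ} (hr : ‖r‖ < 1) :
    HasSum (fun m : ℕ ↦ ((m + 1 : ℕ) : ℂ) * ∑' n : ℕ+, (n : ℂ) ^ (p + 1) * r ^ ((m + 1) * n : ℕ))
      (∑' n : ℕ, ((n + 1 : ℕ) : ℂ) * ((∑ d ∈ (n + 1).divisors, (d : ℂ) ^ p) * r ^ (n + 1))) := by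
  have hS := wls_summable p hr
  have e1 : ∑' c : ℕ+ × ℕ+, ((c.1 * c.2 : ℕ) : ℂ) * ((c.2 : ℂ) ^ p * r ^ (c.1 * c.2 : ℕ)) =
      ∑' n : ℕ, ((n + 1 : ℕ) : ℂ) * ((∑ d ∈ (n + 1).divisors, (d : ℂ) ^ p) * r ^ (n + 1)) := by
    rw [← tsum_pnat_eq_tsum_succ
      (f := fun n : ℕ ↦ (n : ℂ) * ((∑ d ∈ n.divisors, (d : ℂ) ^ p) * r ^ n)),
      ← sigmaAntidiagonalEquivProd.tsum_eq]
    refine (Summable.tsum_sigma (sigmaAntidiagonalEquivProd.summable_iff.mpr hS)).trans ?_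
    refine tsum_congr fun n ↦ ?_
    rw [tsum_fintype]
    have h (x : Nat.divisorsAntidiagonal n) :
        (((sigmaAntidiagonalEquivProd ⟨n, x⟩).1 * (sigmaAntidiagonalEquivProd ⟨n, x⟩).2 : ℕ) : ℂ) *
        (((sigmaAntidiagonalEquivProd ⟨n, x⟩).2 : ℂ) ^ p *
         r ^ ((sigmaAntidiagonalEquivProd ⟨n, x⟩).1 * (sigmaAntidiagonalEquivProd ⟨n, x⟩).2 : ℕ))
        = (n : ℂ) * ((x.1.2 : ℂ) ^ p * r ^ (n : ℕ)) := by
      have h2 := divisorsAntidiagonalFactors_eq x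
      have h3 : ((sigmaAntidiagonalEquivProd ⟨n, x⟩).1 *
        (sigmaAntidiagonalEquivProd ⟨n, x⟩).2 : ℕ) = n := h2
      rw [h3]
      rfl
    refine (Finset.sum_congr rfl fun x _ ↦ h x).trans ?_
    rw [ Finset.univ_eq_attach,
      Finset.sum_attach _ (fun x : ℕ × ℕ ↦ (n : ℂ) * ((x.2 : ℂ) ^ p * r ^ (n : ℕ))),
      ← Finset.mul_sum, ← Finset.sum_mul,
      Nat.sum_divisorsAntidiagonal' (fun _ y ↦ (y : ℂ) ^ p)]
  rw [← e1]
  have h1 := hS.hasSum.prod_fiberwise (fun m ↦ (hS.prod_factor m).hasSum)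
  rw [← hasSum_pnat_iff_hasSum_succ
    (f := fun m : ℕ ↦ (m : ℂ) * ∑' n : ℕ+, (n : ℂ) ^ (p + 1) * r ^ (m * n : ℕ))]
  convert! h1 using 1
  funext m
  rw [← tsum_mul_left]
  refine tsum_congr fun n ↦ ?_
  push_cast
  ring

lemma wls_norm_exp (y : ℂ) : ‖Complex.exp (2 * Real.pi * Complex.I * y)‖ =
    Real.exp (-(2 * Real.pi * y.im)) := by
  rw [Complex.norm_exp]; congr 1; simp

lemma wls_deriv (p : ℕ) (τ : ℂ) (hτ : 0 < τ.im) :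
    HasDerivAt (fun z : ℂ ↦ ∑' n : ℕ, (∑ d ∈ (n + 1).divisors, (d : ℂ) ^ p) *
          Complex.exp (2 * Real.pi * Complex.I * z) ^ (n + 1))
      (2 * Real.pi * Complex.I * ∑' n : ℕ, ((n + 1 : ℕ) : ℂ) *
        ((∑ d ∈ (n + 1).divisors, (d : ℂ) ^ p) *
          Complex.exp (2 * Real.pi * Complex.I * τ) ^ (n + 1))) τ := by
  obtain ⟨c, hc⟩ : ∃ c, c = τ.im / 2 := ⟨_, rfl⟩
  have hc0 : 0 < c := by rw [hc]; positivity
  obtain ⟨s, hs⟩ : ∃ s, s = Real.exp (-(2 * Real.pi * c)) := ⟨_, rfl⟩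
  have hs0 : 0 < s := by rw [hs]; exact Real.exp_pos _
  have hs1 : ‖s‖ < 1 := by
    rw [Real.norm_of_nonneg hs0.le, hs, Real.exp_lt_one_iff]
    have := Real.pi_pos
    have : 0 < 2 * Real.pi * c := by positivity
    linarith
  have hsig (n : ℕ) : ‖∑ d ∈ (n + 1).divisors, (d : ℂ) ^ p‖ ≤ ((n + 1 : ℕ) : ℝ) ^ (p + 1) := by
    have := ArithmeticFunction.sigma_le_pow_succ p (n + 1)
    rw [ArithmeticFunction.sigma_apply] at this
    have h2 : (∑ d ∈ (n + 1).divisors, (d : ℂ) ^ p) =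
      ((∑ d ∈ (n + 1).divisors, d ^ p : ℕ) : ℂ) := by push_cast; rfl
    rw [h2, Complex.norm_natCast]
    exact_mod_cast this
  have hq (y : ℂ) (hy : c < y.im) : ‖Complex.exp (2 * Real.pi * Complex.I * y)‖ ≤ s := by
    rw [wls_norm_exp, hs]
    have := Real.pi_pos
    gcongr
  have hsum (j : ℕ) : Summable fun n : ℕ ↦ ((n + 1 : ℕ) : ℝ) ^ j * s ^ (n + 1) :=
    (summable_nat_add_iff (f := fun n : ℕ ↦ (n : ℝ) ^ j * s ^ n) 1).mpr (summable_pow_mul_geometric_of_norm_lt_one j hs1)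
  have hmem : τ ∈ {z : ℂ | c < z.im} := by
    change c < τ.im
    linarith
  rw [← tsum_mul_left]
  refine hasDerivAt_tsum_of_isPreconnected (t := {z : ℂ | c < z.im})
    (g := fun (n : ℕ) (z : ℂ) ↦ (∑ d ∈ (n + 1).divisors, (d : ℂ) ^ p) *
          Complex.exp (2 * Real.pi * Complex.I * z) ^ (n + 1))
    (g' := fun n y ↦ 2 * Real.pi * Complex.I * (((n + 1 : ℕ) : ℂ) *
        ((∑ d ∈ (n + 1).divisors, (d : ℂ) ^ p) *
          Complex.exp (2 * Real.pi * Complex.I * y) ^ (n + 1))))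
    ((hsum (p + 2)).mul_left (2 * Real.pi)) (isOpen_lt continuous_const Complex.continuous_im)
    (convex_halfSpace_im_gt c).isPreconnected ?_ ?_ hmem ?_ hmem
  · intro n y _
    have h1 : HasDerivAt (fun z : ℂ ↦ 2 * Real.pi * Complex.I * z) (2 * Real.pi * Complex.I) y := by
      simpa using (hasDerivAt_id y).const_mul (2 * Real.pi * Complex.I)
    convert! (h1.cexp.pow (n + 1)).const_mul (∑ d ∈ (n + 1).divisors, (d : ℂ) ^ p) using 1
    simp only [Nat.add_sub_cancel]
    ring
  · intro n y hy
    have h1 : ‖(2 * Real.pi * Complex.I : ℂ)‖ = 2 * Real.pi := by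
      simp [abs_of_pos Real.pi_pos]
    rw [norm_mul, h1, norm_mul, norm_mul, Complex.norm_natCast, norm_pow]
    have := Real.pi_pos
    calc _ ≤ 2 * Real.pi * (((n + 1 : ℕ) : ℝ) * (((n + 1 : ℕ) : ℝ) ^ (p + 1) * s ^ (n + 1))) := by
          gcongr
          · exact hsig n
          · exact hq y hy
      _ = _ := by ring
  · refine Summable.of_norm_bounded (hsum (p + 1)) fun n ↦ ?_
    rw [norm_mul, norm_pow]
    gcongr
    · exact hsig n
    · exact hq τ hmem

lemma wls_sum (f : ℤ → ℂ) (ε : ℂ) (hf : ∀ m, f (-m) = ε * f m) (h0 : f 0 = 0) (M : ℕ) :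
    ∑ m ∈ Finset.Icc (-(M : ℤ)) M, f m = (1 + ε) * ∑ m ∈ Finset.range M, f ((m + 1 : ℕ) : ℤ) := by
  induction M with
  | zero => simp [h0]
  | succ M ih =>
    rw [Nat.cast_add, Nat.cast_one, Finset.Icc_succ_succ, Finset.sum_union (by simp),
      Finset.sum_pair (by lia), ih, Finset.sum_range_succ, hf]
    push_cast
    ring

theorem weighted_lattice_sum (k : ℕ) (hk : 3 ≤ k) (τ : ℂ) (hτ : 0 < τ.im) :
    ∃ F : ℤ → ℂ,
      (∀ m : ℤ, Filter.Tendsto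
        (fun N : ℕ => (2 * Real.pi * Complex.I) ^ (-(k : ℤ)) *
          ∑ n ∈ (Finset.Icc (-(N : ℤ)) N).filter (fun n => (m, n) ≠ (0, 0)),
            ((m : ℂ) * τ + n) ^ (-(k : ℤ)))
        Filter.atTop (nhds (F m))) ∧
      Filter.Tendsto (fun M : ℕ => ∑ m ∈ Finset.Icc (-(M : ℤ)) M, (m : ℂ) * F m)
        Filter.atTop (nhds (-(Eis' (k - 1) τ / ((k : ℂ) - 1)))) := by
  obtain ⟨p, rfl⟩ : ∃ p, k = p + 2 := ⟨k - 2, by omega⟩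
  have hp : 1 ≤ p := by omega
  have hpi : (2 * Real.pi * Complex.I : ℂ) ≠ 0 := Complex.two_pi_I_ne_zero
  set q := Complex.exp (2 * Real.pi * Complex.I * τ) with hq
  have hq1 : ‖q‖ < 1 := UpperHalfPlane.norm_exp_two_pi_I_lt_one ⟨τ, hτ⟩
  set F : ℤ → ℂ := fun m ↦ (2 * Real.pi * Complex.I) ^ (-((p + 2 : ℕ) : ℤ)) *
    ∑' n : ℤ, ((m : ℂ) * τ + n) ^ (-((p + 2 : ℕ) : ℤ)) with hF
  have hFneg (m : ℤ) : F (-m) = (-1) ^ p * F m := by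
    simp only [hF]
    rw [← tsum_comp_neg, mul_left_comm, ← tsum_mul_left (a := ((-1 : ℂ)) ^ p)]
    congr 1
    refine tsum_congr fun n ↦ ?_
    have : (((-m : ℤ) : ℂ) * τ + ((-n : ℤ) : ℂ)) = (-1) * ((m : ℂ) * τ + n) := by
      push_cast; ring
    rw [this, mul_zpow]
    congr 1
    rw [zpow_neg, zpow_natCast, pow_add, mul_inv, ← inv_pow]
    simp [inv_neg]
  have hFpos (m : ℕ) : F ((m + 1 : ℕ) : ℤ) = (-1) ^ p / ((p + 1).factorial : ℂ) *
      ∑' n : ℕ+, (n : ℂ) ^ (p + 1) * q ^ ((m + 1) * n : ℕ) := by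
    have hz : 0 < (((m + 1 : ℕ) : ℂ) * τ).im := by
      have h2 : (((m + 1 : ℕ) : ℂ) * τ).im = ((m + 1 : ℕ) : ℝ) * τ.im := by
        rw [Complex.mul_im, Complex.natCast_re, Complex.natCast_im, zero_mul, add_zero]
      rw [h2]
      positivity
    have := EisensteinSeries.qExpansion_identity_pnat (k := p + 1) (by omega) ⟨_, hz⟩
    simp only at this
    simp only [hF]
    have e1 : ∑' n : ℤ, ((((m + 1 : ℕ) : ℤ) : ℂ) * τ + n) ^ (-((p + 2 : ℕ) : ℤ)) =
       ∑' n : ℤ, 1 / (((m + 1 : ℕ) : ℂ) * τ + n) ^ (p + 1 + 1) := by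
      refine tsum_congr fun n ↦ ?_
      rw [zpow_neg, zpow_natCast, one_div, Int.cast_natCast]
    rw [e1, this, ← mul_assoc]
    congr 1
    · rw [zpow_neg, zpow_natCast, neg_mul, neg_mul, neg_pow]
      field_simp
      ring
    · refine tsum_congr fun n ↦ ?_
      rw [hq, ← Complex.exp_nat_mul, ← Complex.exp_nat_mul]
      congr 2
      push_cast
      ring
  refine ⟨F, fun m ↦ ?_, ?_⟩
  · have h1 := EisensteinSeries.linear_right_summable τ m (k := ((p + 2 : ℕ) : ℤ)) (by omega)
    simp_rw [← zpow_neg] at h1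
    have h2 := (h1.hasSum.comp Finset.tendsto_Icc_neg).const_mul
      ((2 * Real.pi * Complex.I : ℂ) ^ (-((p + 2 : ℕ) : ℤ)))
    refine h2.congr fun N ↦ ?_
    congr 1
    symm
    refine Finset.sum_filter_of_ne fun n _ hn h ↦ hn ?_
    simp only [Prod.mk.injEq] at h
    rw [h.1, h.2]
    simp only [Int.cast_zero, zero_mul, add_zero]
    exact zero_zpow _ (by omega)
  · have hsum := wls_sum (fun m ↦ (m : ℂ) * F m) (-(-1) ^ p)
      (fun m ↦ by simp only [hFneg]; push_cast; ring) (by simp)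
    simp_rw [hsum]
    have h1 := (((wls_hasSum p hq1).mul_left
      ((-1) ^ p / ((p + 1).factorial : ℂ))).tendsto_sum_nat).const_mul (1 + -(-1) ^ p : ℂ)
    have hk1 : p + 2 - 1 = p + 1 := by omega
    rw [hk1]
    convert! h1 using 2
    · rename_i M
      congr 1
      refine Finset.sum_congr rfl fun m _ ↦ ?_
      rw [hFpos]
      push_cast
      ring
    · rcases Nat.even_or_odd p with he | ho
      · have : Eis (p + 1) = fun _ ↦ 0 := by
          funext z
          rw [Eis, if_neg]
          rintro ⟨h, _⟩
          exact (Nat.not_even_iff_odd.mpr he.add_one) h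
        simp [Eis', this, he.neg_one_pow]
      · have : Eis (p + 1) = fun z ↦ (2 / (Nat.factorial p : ℂ)) *
          (-(bernoulli (p + 1) : ℂ) / (2 * (p + 1 : ℕ)) +
          ∑' n : ℕ, (∑ d ∈ (n + 1).divisors, (d : ℂ) ^ p) *
          Complex.exp (2 * Real.pi * Complex.I * z) ^ (n + 1)) := by
          funext z
          rw [Eis, if_pos ⟨ho.add_one, by omega⟩, Nat.add_sub_cancel]
        have hd := ((wls_deriv p τ hτ).const_add
          (-(bernoulli (p + 1) : ℂ) / (2 * (p + 1 : ℕ)))).const_mul (2 / (Nat.factorial p : ℂ))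
        rw [Eis', this, hd.deriv, ho.neg_one_pow, Nat.factorial_succ]
        have hf : (p.factorial : ℂ) ≠ 0 := by exact_mod_cast p.factorial_ne_zero
        have hp1 : (p : ℂ) + 1 ≠ 0 := by exact_mod_cast p.succ_ne_zero
        have hp2 : (((p + 2 : ℕ) : ℂ) - 1) = (p : ℂ) + 1 := by push_cast; ring
        rw [hp2, Nat.cast_mul, Nat.cast_add_one]
        rw [← hq]
        field_simp
        ring
end

section
/- For all even integers r, s ≥ 2, the function P_{r,s}(τ) = E_r(τ)E_s(τ) + δ_{r,2} E_s'(τ)/s + δ_{s,2} E_r'(τ)/r is (the underlying function of) a modular form of weight r + s on SL₂(ℤ). -/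
open Complex Finset Filter

section Helpers

open UpperHalfPlane hiding I
open scoped Manifold MatrixGroups ModularForm Topology ArithmeticFunction.sigma
open EisensteinSeries Derivative ModularForm

/-- Build a level one modular form. -/
lemma exists_mf {k : ℤ} (F : ℍ → ℂ) (hF : MDiff F) (hs : ∀ γ : SL(2, ℤ), F ∣[k] γ = F)
    (hb : IsBoundedAtImInfty F) :
    ∃ f : ModularForm (CongruenceSubgroup.Gamma 1) k, ∀ τ : ℍ, f τ = F τ := by
  refine ⟨{ toFun := F, slash_action_eq' := ?_, holo' := hF, bdd_at_cusps' := ?_ }, fun τ => rfl⟩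
  · rintro g ⟨γ, -, rfl⟩
    exact hs γ
  · intro c hc
    rw [CongruenceSubgroup.Gamma_one_coe_eq_SL] at hc
    rw [OnePoint.isBoundedAt_iff_forall_SL2Z hc]
    intro γ _
    rw [hs γ]
    exact hb

/-- Cauchy estimate: the derivative of a bounded holomorphic function is bounded. -/
lemma bdd_D {F : ℍ → ℂ} (hF : MDiff F) (hb : IsBoundedAtImInfty F) :
    IsBoundedAtImInfty (normalizedDerivOfComplex F) := by
  rw [isBoundedAtImInfty_iff] at hb ⊢
  obtain ⟨M, A, h⟩ := hb
  refine ⟨‖(2 * Real.pi * I : ℂ)⁻¹‖ * M, max A 0 + 2, fun z hz => ?_⟩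
  rw [normalizedDerivOfComplex, norm_mul]
  gcongr
  have him : ∀ w ∈ Metric.closedBall (z : ℂ) 1, max A 0 + 1 ≤ w.im := by
    intro w hw
    have h1 : |(w - z).im| ≤ 1 := (Complex.abs_im_le_norm _).trans (by simpa [dist_eq_norm] using hw)
    have h2 := (abs_le.1 h1).1
    simp only [Complex.sub_im, coe_im] at h2
    linarith
  rw [UpperHalfPlane.mdifferentiable_iff] at hF
  have hpos : ∀ w ∈ Metric.closedBall (z : ℂ) 1, 0 < w.im := fun w hw => by
    have := him w hw
    have := le_max_right A 0
    linarith
  have := Complex.norm_deriv_le_of_forall_mem_sphere_norm_le (c := (z : ℂ)) (R := 1) (C := M)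
    (f := F ∘ ofComplex) one_pos ?_ ?_
  · simpa using this
  · apply DifferentiableOn.diffContOnCl
    rw [closure_ball _ one_ne_zero]
    exact hF.mono fun w hw => hpos w hw
  · intro w hw
    have hw := Metric.sphere_subset_closedBall hw
    rw [Function.comp_apply, ofComplex_apply_of_im_pos (hpos w hw)]
    apply h
    have := him w hw
    have := le_max_left A 0
    change A ≤ w.im
    linarith

lemma tsum_conv (k : ℕ) (q : ℂ) :
    ∑' n : ℕ, (∑ d ∈ (n + 1).divisors, (d : ℂ) ^ (k - 1)) * q ^ (n + 1) =
      ∑' n : ℕ+, (σ (k - 1) n : ℂ) * q ^ (n : ℕ) := by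
  rw [tsum_pnat_eq_tsum_succ (f := fun n : ℕ => (σ (k - 1) n : ℂ) * q ^ n)]
  simp [ArithmeticFunction.sigma_apply]

lemma Eis_two (z : ℍ) : Eis 2 z = (-1 / 12 : ℂ) * E2 z := by
  have h := tsum_conv 2 (Complex.exp (2 * Real.pi * Complex.I * z))
  have hq : Function.Periodic.qParam 1 z = Complex.exp (2 * Real.pi * Complex.I * z) := by
    simp [Function.Periodic.qParam]
  rw [Eis, if_pos ⟨even_two, le_rfl⟩, h, E2_eq_tsum_cexp, bernoulli_two]
  norm_num
  ring

lemma Eis_ge {k : ℕ} (hk : 3 ≤ k) (hk2 : Even k) (z : ℍ) :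
    Eis k z = (-(bernoulli k : ℂ) / (k.factorial)) * E hk z := by
  have h := tsum_conv k (Complex.exp (2 * Real.pi * Complex.I * z))
  have hB : (bernoulli k : ℂ) ≠ 0 := by
    intro h0
    obtain ⟨m, rfl⟩ := hk2.two_dvd
    have hz := riemannZeta_two_mul_nat (k := m) (by lia)
    rw [show (bernoulli (2 * m) : ℂ) = 0 from h0] at hz
    refine riemannZeta_ne_zero_of_one_lt_re (s := 2 * (m : ℂ)) ?_ (by rw [hz]; simp)
    have : (1 : ℝ) < 2 * m := by exact_mod_cast (by lia : 1 < 2 * m)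
    simpa using this
  rw [Eis, if_pos ⟨hk2, by lia⟩, h, q_expansion_bernoulli hk hk2]
  have hf : (k.factorial : ℂ) = k * (k - 1).factorial := by
    rw [← Nat.mul_factorial_pred (by lia)]; push_cast; rfl
  have h1 : (k : ℂ) ≠ 0 := by exact_mod_cast (by lia : k ≠ 0)
  have h2 : ((k - 1).factorial : ℂ) ≠ 0 := by exact_mod_cast (Nat.factorial_ne_zero _)
  rw [hf]
  simp only [zpow_natCast]
  field_simp
  ring

lemma Eis'_eq (k : ℕ) (z : ℍ) :
    Eis' k z = normalizedDerivOfComplex (fun w : ℍ => Eis k w) z := by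
  rw [Eis', normalizedDerivOfComplex]
  congr 1
  apply Filter.EventuallyEq.deriv_eq
  filter_upwards [isOpen_upperHalfPlaneSet.mem_nhds z.im_pos] with w hw
  simp [ofComplex_apply_of_im_pos hw]

lemma Eis_mdiff {k : ℕ} (hk : 2 ≤ k) (hk2 : Even k) : MDiff (fun w : ℍ => Eis k w) := by
  rcases eq_or_lt_of_le hk with rfl | h
  · simp_rw [Eis_two]
    exact mdifferentiable_const.mul E2_mdifferentiable
  · simp_rw [Eis_ge h hk2]
    exact mdifferentiable_const.mul (E h).holo'

lemma E_slash {k : ℕ} (hk : 3 ≤ k) (γ : SL(2, ℤ)) : (E hk : ℍ → ℂ) ∣[(k : ℤ)] γ = E hk :=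
  (E hk).slash_action_eq' _ ⟨γ, rfl⟩

lemma Eis_slash {k : ℕ} (hk : 3 ≤ k) (hk2 : Even k) (γ : SL(2, ℤ)) :
    (fun w : ℍ => Eis k w) ∣[(k : ℤ)] γ = (fun w : ℍ => Eis k w) := by
  have : (fun w : ℍ => Eis k w) = (-(bernoulli k : ℂ) / (k.factorial)) • (E hk : ℍ → ℂ) := by
    ext z; simp [Eis_ge hk hk2]
  rw [this, ModularForm.SL_smul_slash, E_slash]

lemma Eis_bdd {k : ℕ} (hk : 2 ≤ k) (hk2 : Even k) :
    IsBoundedAtImInfty (fun w : ℍ => Eis k w) := by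
  rcases eq_or_lt_of_le hk with rfl | h
  · simp_rw [Eis_two]
    exact (isBoundedAtImInfty_E2).const_mul_left _
  · simp_rw [Eis_ge h hk2]
    have : IsBoundedAtImInfty (E h : ℍ → ℂ) := ModularFormClass.bdd_at_infty (E h)
    exact this.const_mul_left _

/-- derivative of `D2`. -/
lemma D2_hasDeriv (γ : SL(2, ℤ)) (z : ℍ) :
    HasDerivAt (D2 γ ∘ ofComplex)
      (2 * Real.pi * I * (- (γ 1 0 / denom γ z) ^ 2)) (z : ℂ) := by
  have h := (hasDerivAt_denom_zpow (γ : GL (Fin 2) ℝ) (-1) z).const_mul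
    (2 * Real.pi * I * (γ 1 0 : ℂ))
  have hz := denom_ne_zero (γ : GL (Fin 2) ℝ) z
  refine (h.congr_of_eventuallyEq ?_).congr_deriv ?_
  · filter_upwards [isOpen_upperHalfPlaneSet.mem_nhds z.im_pos] with w hw
    simp [D2, ofComplex_apply_of_im_pos hw, div_eq_mul_inv]
  · rw [show (-1 - 1 : ℤ) = -2 by norm_num, zpow_neg]
    simp
    field_simp
    try norm_cast

lemma D_D2 (γ : SL(2, ℤ)) (z : ℍ) : normalizedDerivOfComplex (D2 γ) z =
    - (γ 1 0 / denom γ z) ^ 2 := by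
  rw [normalizedDerivOfComplex, (D2_hasDeriv γ z).deriv, inv_mul_cancel_left₀]
  simp

lemma D2_mdiff (γ : SL(2, ℤ)) : MDiff (D2 γ) := fun z =>
  mdifferentiableAt_iff.2 (D2_hasDeriv γ z).differentiableAt

lemma E2_slash4 (γ : SL(2, ℤ)) :
    (E2 ^ 2 - (12 : ℂ) • normalizedDerivOfComplex E2) ∣[(4 : ℤ)] γ =
      E2 ^ 2 - (12 : ℂ) • normalizedDerivOfComplex E2 := by
  have h1 := normalizedDerivOfComplex_SL_slash (k := 2) E2_mdifferentiable (γ := γ)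
  rw [E2_slash_action, normalizedDerivOfComplex_sub _ _ E2_mdifferentiable ((D2_mdiff γ).const_smul _),
    normalizedDerivOfComplex_smul _ _ (D2_mdiff γ)] at h1
  have h2 := ModularForm.mul_slash_SL2 2 2 γ E2 E2
  rw [E2_slash_action] at h2
  ext z
  have h1 := congrFun h1 z
  have h2 := congrFun h2 z
  have hS : ((E2 ^ 2 - (12 : ℂ) • normalizedDerivOfComplex E2) ∣[(4 : ℤ)] γ) =
    ((E2 * E2) ∣[(2 + 2 : ℤ)] γ) - (12 : ℂ) • ((normalizedDerivOfComplex E2) ∣[(2 + 2 : ℤ)] γ) := by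
    rw [sq, sub_eq_add_neg, SlashAction.add_slash, SlashAction.neg_slash, ModularForm.SL_smul_slash]
    rfl
  rw [hS]
  simp only [Pi.sub_apply, Pi.smul_apply, Pi.mul_apply, Pi.pow_apply, smul_eq_mul, D_D2] at h1 h2 ⊢
  rw [h2]
  have h3 : (normalizedDerivOfComplex E2 ∣[(2 + 2 : ℤ)] γ) z = _ := (sub_eq_iff_eq_add.1 h1.symm)
  rw [h3]
  have hD : D2 γ z = 2 * Real.pi * I * (γ 1 0 / denom γ z) := by rw [D2]; ring
  rw [hD, riemannZeta_two]
  generalize (γ 1 0 / denom γ z : ℂ) = x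
  have hpi : (Real.pi : ℂ) ≠ 0 := by exact_mod_cast Real.pi_ne_zero
  have hI := I_sq
  push_cast
  field_simp
  grind

lemma case_two (k : ℕ) (hk : 2 ≤ k) (hk2 : Even k) (m : ℤ) (hm : m = k + 2) :
    ∃ f : ModularForm (CongruenceSubgroup.Gamma 1) m,
      ∀ τ : ℍ, f τ = Eis 2 τ * Eis k τ + Eis' k τ / k + if k = 2 then Eis' 2 τ / 2 else 0 := by
  subst hm
  rcases eq_or_lt_of_le hk with rfl | h
  · obtain ⟨f, hf⟩ := exists_mf (k := 4)
      ((1 / 144 : ℂ) • (E2 ^ 2 - (12 : ℂ) • normalizedDerivOfComplex E2)) (by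
        exact ((E2_mdifferentiable.pow 2).sub
          ((normalizedDerivOfComplex_mdifferentiable E2_mdifferentiable).const_smul _)).const_smul _) (by
        intro γ
        rw [ModularForm.SL_smul_slash, E2_slash4]) (by
        have hE := isBoundedAtImInfty_E2
        have hd := bdd_D E2_mdifferentiable hE
        have := (((hE.mul hE).sub (hd.const_mul_left 12)).const_mul_left (1 / 144 : ℂ))
        refine this.congr_left fun z => ?_
        simp [sq])
    refine ⟨f, fun τ => ?_⟩
    have : (fun w : ℍ => Eis 2 w) = (-1 / 12 : ℂ) • E2 := by ext z; simp [Eis_two]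
    rw [hf, Eis'_eq, this, normalizedDerivOfComplex_smul _ _ E2_mdifferentiable, Eis_two]
    simp
    ring
  · have hF := Eis_mdiff hk hk2
    obtain ⟨f, hf⟩ := exists_mf (k := k + 2)
      ((1 / k : ℂ) • serreDerivative (k : ℤ) (fun w : ℍ => Eis k w)) (by
        exact (serreDerivative_mdifferentiable _ hF).const_smul _) (by
        intro γ
        rw [ModularForm.SL_smul_slash, serreDerivative_slash_invariant hF (Eis_slash h hk2 γ)]) (by
        have hE := isBoundedAtImInfty_E2
        have hb := Eis_bdd hk hk2
        have hd := bdd_D hF hb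
        have := ((hd.sub ((hE.mul hb).const_mul_left ((k : ℂ) * 12⁻¹))).const_mul_left (1 / k : ℂ))
        refine this.congr_left fun z => ?_
        simp only [Pi.smul_apply, Pi.mul_apply, serreDerivative_apply, smul_eq_mul,
          Int.cast_natCast]
        ring)
    refine ⟨f, fun τ => ?_⟩
    have h1 : (k : ℂ) ≠ 0 := by exact_mod_cast (by lia : k ≠ 0)
    rw [hf, Eis'_eq, if_neg (by lia), Eis_two]
    simp
    field_simp
    ring

end Helpers

open UpperHalfPlane in
/-- For even `r, s ≥ 2`, the function `P_{r,s}` is (the underlying function of)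
a modular form of weight `r + s` on `SL₂(ℤ)`. -/
theorem Pf_is_modular_form (r s : ℕ) (hre : Even r) (hse : Even s)
    (hr : 2 ≤ r) (hs : 2 ≤ s) :
    ∃ f : ModularForm (CongruenceSubgroup.Gamma 1) ((r : ℤ) + s),
      ∀ τ : UpperHalfPlane, f τ = Pf r s ↑τ := by
  by_cases h1 : r = 2
  · subst h1
    obtain ⟨f, hf⟩ := case_two s hs hse ((2 : ℕ) + s) (by push_cast; ring)
    exact ⟨f, fun τ => by rw [hf, Pf]; simp⟩
  by_cases h2 : s = 2
  · subst h2
    obtain ⟨f, hf⟩ := case_two r hr hre (r + (2 : ℕ)) (by push_cast; ring)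
    exact ⟨f, fun τ => by rw [hf, Pf]; simp [h1]; ring⟩
  · obtain ⟨f, hf⟩ := exists_mf (k := (r : ℤ) + s)
      ((fun w : ℍ => Eis r w) * (fun w : ℍ => Eis s w)) (by
        exact (Eis_mdiff hr hre).mul (Eis_mdiff hs hse)) (by
        intro γ
        rw [ModularForm.mul_slash_SL2, Eis_slash (by lia) hre, Eis_slash (by lia) hse]) (by
        exact BoundedAtFilter.mul (Eis_bdd hr hre) (Eis_bdd hs hse))
    exact ⟨f, fun τ => by rw [hf, Pf]; simp [h1, h2]⟩
end

section
/- For every even integer k > 0, the dimension of the ℂ-vector space M_k of modular forms of weight k on SL₂(ℤ) equals ⌊k/4⌋ − ⌊(k−2)/6⌋. -/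
theorem finrank_aux (G : Subgroup (GL (Fin 2) ℝ)) [G.HasDetOne] (k : ℕ) (hk : Even k)
    (hG : G = (Matrix.SpecialLinearGroup.mapGL ℝ : Matrix.SpecialLinearGroup (Fin 2) ℤ →* _).range) :
    Module.finrank ℂ (ModularForm G (k : ℤ)) =
      if k % 12 = 2 then k / 12 else k / 12 + 1 := by
  subst hG
  have h := ModularForm.dimension_level_one k hk
  apply Module.finrank_eq_of_rank_eq
  rw [h]
  simp only [Nat.floor_div_eq_div, Nat.ModEq, Nat.modEq_iff_dvd]
  split_ifs <;> simp_all

/-- For every even integer `k > 0`, the dimension of the space of modular forms of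
weight `k` on `SL₂(ℤ)` equals `⌊k/4⌋ - ⌊(k-2)/6⌋`. -/
theorem dim_modular_forms (k : ℕ) (hk : Even k) (hpos : 0 < k) :
    Module.finrank ℂ (ModularForm (CongruenceSubgroup.Gamma 1) (k : ℤ))
      = k / 4 - (k - 2) / 6 := by
  rw [finrank_aux _ k hk (by rw [CongruenceSubgroup.Gamma_one_top, MonoidHom.range_eq_map])]
  obtain ⟨m, rfl⟩ := hk
  split_ifs <;> omega
end
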